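/- arXiv:1601.07343 — 3 statements merged into one kernel-verified Lean document; each statement's English description precedes it below -/
import Mathlib

section
/- No double circulant (pure or bordered) self-dual binary code of length 96 with minimum weight 16 has a self-dual neighbor of minimum weight at least 18: if C is such a code and C' is a self-dual code of length 96 with dim(C ∩ C') = 47, then the minimum weight of C' is at most 16. -/
/-- The standard inner product on `ι → ZMod 2`. -/
def dot {ι : Type*} [Fintype ι] (x y : ι → ZMod 2) : ZMod 2 := ∑ i, x i * y i

/-- A binary linear code is self-dual if it coincides with its dual. -/
def IsSelfDual {ι : Type*} [Fintype ι] (C : Submodule (ZMod 2) (ι → ZMod 2)) : Prop :=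
  ∀ x, x ∈ C ↔ ∀ y ∈ C, dot x y = 0

/-- `C` has minimum (nonzero) weight exactly `d`. -/
def MinWeightIs {ι : Type*} [Fintype ι] (C : Submodule (ZMod 2) (ι → ZMod 2)) (d : ℕ) : Prop :=
  (∃ x ∈ C, x ≠ 0 ∧ hammingNorm x = d) ∧ ∀ x ∈ C, x ≠ 0 → d ≤ hammingNorm x

/-- `A_i(C)`: the number of codewords of `C` of Hamming weight `i`. -/
noncomputable def weightEnum {ι : Type*} [Fintype ι] (C : Submodule (ZMod 2) (ι → ZMod 2)) (i : ℕ) : ℕ :=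
  Set.ncard {x : ι → ZMod 2 | x ∈ C ∧ hammingNorm x = i}

/-- Two codes are equivalent if a coordinate permutation maps one onto the other. -/
def CodeEquiv {ι : Type*} [Fintype ι] (C C' : Submodule (ZMod 2) (ι → ZMod 2)) : Prop :=
  ∃ σ : Equiv.Perm ι, Submodule.map (LinearMap.funLeft (ZMod 2) (ZMod 2) ⇑σ) C = C'

/-- The order of the automorphism group of a code: the number of coordinate
permutations mapping the code onto itself. -/
noncomputable def autGroupOrder {ι : Type*} [Fintype ι] (C : Submodule (ZMod 2) (ι → ZMod 2)) : ℕ :=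
  Nat.card {σ : Equiv.Perm ι // Submodule.map (LinearMap.funLeft (ZMod 2) (ZMod 2) ⇑σ) C = C}

/-- A circulant matrix: each row is the cyclic shift of the previous one. -/
def IsCirculant {n : ℕ} (R : Matrix (Fin n) (Fin n) (ZMod 2)) : Prop :=
  ∃ v : Fin n → ZMod 2, R = Matrix.circulant v

/-- The pure double circulant code with generator matrix `(I_n | R)`. -/
def pureDCC {n : ℕ} (R : Matrix (Fin n) (Fin n) (ZMod 2)) :
    Submodule (ZMod 2) (Fin n ⊕ Fin n → ZMod 2) :=
  Submodule.span (ZMod 2)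
    (Set.range fun i : Fin n =>
      Sum.elim (fun j => if j = i then (1 : ZMod 2) else 0) (R i))

/-- A bordered matrix: first row `(0,1,…,1)`, first column `(0,1,…,1)ᵀ`, and
lower-right block an `n × n` circulant matrix. -/
def IsBorderMatrix {n : ℕ} (B : Matrix (Fin (n + 1)) (Fin (n + 1)) (ZMod 2)) : Prop :=
  B 0 0 = 0 ∧ (∀ j, j ≠ 0 → B 0 j = 1) ∧ (∀ i, i ≠ 0 → B i 0 = 1) ∧
  ∃ R' : Matrix (Fin n) (Fin n) (ZMod 2), IsCirculant R' ∧
    ∀ i j : Fin n, B i.succ j.succ = R' i j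

/-- The bordered double circulant code with generator matrix `(I_{n+1} | B)`. -/
def borderedDCC {n : ℕ} (B : Matrix (Fin (n + 1)) (Fin (n + 1)) (ZMod 2)) :
    Submodule (ZMod 2) (Fin (n + 1) ⊕ Fin (n + 1) → ZMod 2) :=
  Submodule.span (ZMod 2)
    (Set.range fun i : Fin (n + 1) =>
      Sum.elim (fun j => if j = i then (1 : ZMod 2) else 0) (B i))

namespace NB
set_option linter.unusedSectionVars false

/-- binary group algebra of `Z_n` -/
def E (n : ℕ) := ZMod n → ZMod 2

section ring
variable {n : ℕ} [NeZero n]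

instance : Add (E n) := ⟨fun a b i => a i + b i⟩
instance : Zero (E n) := ⟨fun _ => 0⟩
instance : Neg (E n) := ⟨fun a i => - a i⟩
instance : One (E n) := ⟨fun i => if i = 0 then 1 else 0⟩
instance : Mul (E n) := ⟨fun a b i => ∑ j, a j * b (i - j)⟩

theorem add_ap (a b : E n) (i) : (a + b) i = a i + b i := rfl
theorem zero_ap (i) : (0 : E n) i = 0 := rfl
theorem one_ap (i) : (1 : E n) i = if i = 0 then 1 else 0 := rfl
theorem mul_ap (a b : E n) (i) : (a * b) i = ∑ j, a j * b (i - j) := rfl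

theorem E_ext {a b : E n} (h : ∀ i, a i = b i) : a = b := funext h

theorem mul_comm' (a b : E n) : a * b = b * a := by
  refine E_ext fun i => ?_
  rw [mul_ap, mul_ap]
  refine Fintype.sum_equiv (Equiv.subLeft i) _ _ fun j => ?_
  simp [mul_comm]

theorem mul_assoc' (a b c : E n) : a * b * c = a * (b * c) := by
  refine E_ext fun i => ?_
  simp only [mul_ap, Finset.sum_mul, Finset.mul_sum]
  rw [Finset.sum_comm]
  refine Finset.sum_congr rfl fun j _ => ?_
  refine Fintype.sum_equiv (Equiv.subRight j) _ _ fun k => ?_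
  simp [mul_assoc, sub_sub]

instance : CommRing (E n) :=
  CommRing.ofMinimalAxioms
    (fun a b c => E_ext fun i => add_assoc (a i) (b i) (c i))
    (fun a => E_ext fun i => zero_add (a i))
    (fun a => E_ext fun i => neg_add_cancel (a i))
    mul_assoc' mul_comm'
    (fun a => E_ext fun i => by simp [mul_ap, one_ap])
    (fun a b c => E_ext fun i => by simp [mul_ap, add_ap, mul_add, Finset.sum_add_distrib])

theorem add_self (a : E n) : a + a = 0 := E_ext fun i => CharTwo.add_self_eq_zero (a i)

theorem sum_ap {ι : Type*} (s : Finset ι) (f : ι → E n) (i) : (∑ j ∈ s, f j) i = ∑ j ∈ s, f j i := by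
  classical
  induction s using Finset.induction_on with
  | empty => rfl
  | insert a s ha ih => rw [Finset.sum_insert ha, Finset.sum_insert ha, add_ap, ih]

/-- monomial -/
def X (k : ZMod n) : E n := fun i => if i = k then 1 else 0

theorem X_mul (k : ZMod n) (a : E n) (i) : (X k * a) i = a (i - k) := by
  simp [mul_ap, X]

theorem X_zero : (X 0 : E n) = 1 := rfl
theorem X_add (k l : ZMod n) : (X k * X l : E n) = X (k + l) := by
  refine E_ext fun i => ?_
  rw [X_mul]; simp only [X]; congr 1; rw [eq_iff_iff]; constructor
  · intro h; rw [← h]; ring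
  · intro h; rw [h]; ring

/-- reversal -/
def st (a : E n) : E n := fun i => a (-i)
theorem st_mul (a b : E n) : st (a * b) = st a * st b := by
  refine E_ext fun i => ?_
  simp only [st, mul_ap]
  refine Fintype.sum_equiv (Equiv.neg _) _ _ fun j => ?_
  simp only [Equiv.neg_apply, neg_neg]; congr 2; ring
theorem st_add (a b : E n) : st (a + b) = st a + st b := rfl
theorem st_one : st (1 : E n) = 1 := by
  refine E_ext fun i => ?_
  simp [st, one_ap]
theorem st_st (a : E n) : st (st a) = a := by
  refine E_ext fun i => ?_
  simp [st]
theorem st_X (k : ZMod n) : st (X k) = X (-k) := by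
  refine E_ext fun i => ?_
  simp only [st, X]; congr 1; rw [neg_eq_iff_eq_neg]

/-- weight -/
def wt (a : E n) : ℕ := ∑ i, (a i).val

theorem val_eq_zero_or (x : ZMod 2) : x = 0 ∨ x = 1 := by revert x; decide

theorem wt_X_mul (k) (a : E n) : wt (X k * a) = wt a := by
  unfold wt
  refine Fintype.sum_equiv (Equiv.subRight k) _ _ fun i => ?_
  rw [X_mul]; rfl

/-- multiplier -/
def mu (u : ZMod n) (a : E n) : E n := fun i => a (u * i)

theorem mu_mul {u v : ZMod n} (h : u * v = 1) (a b : E n) : mu u (a * b) = mu u a * mu u b := by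
  refine E_ext fun i => ?_
  simp only [mu, mul_ap]
  refine (Fintype.sum_equiv (⟨fun x => u * x, fun x => v * x, ?_, ?_⟩ : ZMod n ≃ ZMod n) _ _ fun j => ?_).symm
  · intro x; simp only [← mul_assoc, mul_comm v u, h, one_mul]
  · intro x; simp only [← mul_assoc, h, one_mul]
  · simp only [Equiv.coe_fn_mk]; congr 2; ring
theorem mu_mu {u v : ZMod n} (h : u * v = 1) (a : E n) : mu u (mu v a) = a := by
  refine E_ext fun i => ?_
  simp only [mu, ← mul_assoc, mul_comm v u, h, one_mul]
theorem mu_one {u v : ZMod n} (h : u * v = 1) : mu u (1 : E n) = 1 := by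
  refine E_ext fun i => ?_
  simp only [mu, one_ap]; congr 1; rw [eq_iff_iff]; constructor
  · intro hh
    calc i = (u * v) * i := by rw [h, one_mul]
      _ = v * (u * i) := by ring
      _ = 0 := by rw [hh, mul_zero]
  · intro hh; rw [hh, mul_zero]
theorem mu_st (u : ZMod n) (a : E n) : mu u (st a) = st (mu u a) := by
  refine E_ext fun i => ?_
  simp only [mu, st]; congr 1; ring
theorem wt_mu {u v : ZMod n} (h : u * v = 1) (a : E n) : wt (mu u a) = wt a := by
  unfold wt mu
  refine (Fintype.sum_equiv (⟨fun x => u * x, fun x => v * x, ?_, ?_⟩ : ZMod n ≃ ZMod n) _ _ fun j => ?_)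
  · intro x; simp only [← mul_assoc, mul_comm v u, h, one_mul]
  · intro x; simp only [← mul_assoc, h, one_mul]
  · rfl

/-- augmentation -/
def ep (a : E n) : ZMod 2 := ∑ i, a i
theorem ep_add (a b : E n) : ep (a + b) = ep a + ep b := by
  exact Finset.sum_add_distrib (f := fun i => a i) (g := fun i => b i)
theorem ep_wt (a : E n) : ep a = (wt a : ZMod 2) := by
  simp [ep, wt]
theorem ep_mul (a b : E n) : ep (a * b) = ep a * ep b := by
  have h1 : ep (a * b) = ∑ i : ZMod n, ∑ j : ZMod n, a j * b (i - j) := rfl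
  have h2 : ep a * ep b = ∑ j : ZMod n, a j * ∑ k : ZMod n, b k :=
    Finset.sum_mul Finset.univ (fun j => a j) _
  rw [h1, h2, Finset.sum_comm]
  refine Finset.sum_congr rfl fun j _ => ?_
  rw [← Finset.mul_sum]
  congr 1
  exact Fintype.sum_equiv (Equiv.subRight j) _ _ fun k => rfl
theorem ep_X (k) : ep (X k : E n) = 1 := by simp [ep, X]

theorem expand (a : E n) : a = ∑ k, (if a k = 1 then X k else 0) := by
  refine E_ext fun i => ?_
  rw [sum_ap, Finset.sum_eq_single i]
  · rcases val_eq_zero_or (a i) with h | h <;> simp [h, X, zero_ap]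
  · intro b _ hb
    split_ifs
    · simp [X, hb.symm]
    · rfl
  · simp

end ring

section fold
variable {n h : ℕ} [NeZero n] [NeZero h] (hd : h ∣ n)

def fo (a : E n) : E h := fun i => ∑ j, if ZMod.castHom hd (ZMod h) j = i then a j else 0
def io (v : E h) : E n := fun j => v (ZMod.castHom hd (ZMod h) j)

theorem io_mul (v : E h) (a : E n) : io hd v * a = io hd (v * fo hd a) := by
  rw [mul_comm, mul_comm v]
  refine E_ext fun i => ?_
  simp only [io, mul_ap, fo, Finset.sum_mul]
  rw [Finset.sum_comm]
  refine Finset.sum_congr rfl fun j _ => ?_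
  rw [Finset.sum_eq_single (ZMod.castHom hd (ZMod h) j)]
  · rw [if_pos rfl, map_sub]
  · intro b _ hb
    rw [if_neg (Ne.symm hb), zero_mul]
  · simp

theorem io_inj {v w : E h} (H : io hd v = io hd w) : v = w := by
  refine E_ext fun i => ?_
  obtain ⟨j, rfl⟩ := ZMod.ringHom_surjective (ZMod.castHom hd (ZMod h)) i
  exact congrFun H j

theorem io_add (v w : E h) : io hd (v + w) = io hd v + io hd w := rfl
theorem io_st (v : E h) : io hd (st v) = st (io hd v) := by
  refine E_ext fun i => ?_
  simp only [io, st, map_neg]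
theorem io_zero : io hd (0 : E h) = 0 := rfl

theorem io_fo (a : E n) : io hd (fo hd a) = io hd 1 * a := by rw [io_mul, one_mul]

theorem fo_mul (a b : E n) : fo hd (a * b) = fo hd a * fo hd b := by
  apply io_inj hd
  rw [io_fo, ← mul_assoc, ← io_fo, io_mul]

theorem fo_add (a b : E n) : fo hd (a + b) = fo hd a + fo hd b := by
  apply io_inj hd
  rw [io_fo, mul_add, ← io_fo, ← io_fo, io_add]

theorem fo_one : fo hd (1 : E n) = 1 := by
  apply io_inj hd
  rw [io_fo, mul_one]

theorem fo_st (a : E n) : fo hd (st a) = st (fo hd a) := by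
  apply io_inj hd
  rw [io_fo, io_st, io_fo, st_mul, ← io_st, st_one]

theorem fo_X (k : ZMod n) : fo hd (X k) = X (ZMod.castHom hd (ZMod h) k) := by
  refine E_ext fun i => ?_
  simp only [fo, X]
  rw [Finset.sum_eq_single k]
  · by_cases hh : ZMod.castHom hd (ZMod h) k = i
    · rw [if_pos hh, if_pos rfl, if_pos hh.symm]
    · rw [if_neg hh, if_neg (Ne.symm hh)]
  · intro b _ hb; simp [hb]
  · simp

theorem fo_mu {u v : ZMod n} (huv : u * v = 1) (a : E n) :
    fo hd (mu u a) = mu (ZMod.castHom hd (ZMod h) u) (fo hd a) := by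
  apply io_inj hd
  have h1 : ∀ w : E h, io hd (mu (ZMod.castHom hd (ZMod h) u) w) = mu u (io hd w) := by
    intro w
    refine E_ext fun i => ?_
    simp only [io, mu, map_mul]
  rw [io_fo, h1, io_fo, mu_mul huv]
  congr 1
  rw [← h1, mu_one (v := ZMod.castHom hd (ZMod h) v)]
  rw [← map_mul, huv, map_one]

theorem wt_io (c : ℕ) (hc : c * h = n) (v : E h) : wt (io hd v) = c * wt v := by
  unfold wt io
  rw [← Finset.sum_fiberwise (Finset.univ) (ZMod.castHom hd (ZMod h)), Finset.mul_sum]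
  have key : ∀ i : ZMod h, (Finset.univ.filter fun j : ZMod n => ZMod.castHom hd (ZMod h) j = i).card =
      (Finset.univ.filter fun j : ZMod n => ZMod.castHom hd (ZMod h) j = 0).card := by
    intro i
    obtain ⟨k, rfl⟩ := ZMod.ringHom_surjective (ZMod.castHom hd (ZMod h)) i
    refine Finset.card_bij (fun j _ => j - k) ?_ ?_ ?_
    · intro j hj
      simp only [Finset.mem_filter, Finset.mem_univ, true_and] at hj ⊢
      rw [map_sub, hj, sub_self]
    · intro a _ b _ hab; exact sub_left_inj.mp hab
    · intro b hb
      simp only [Finset.mem_filter, Finset.mem_univ, true_and] at hb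
      refine ⟨b + k, ?_, by ring⟩
      simp only [Finset.mem_filter, Finset.mem_univ, true_and]
      rw [map_add, hb, zero_add]
  have key2 : (Finset.univ.filter fun j : ZMod n => ZMod.castHom hd (ZMod h) j = 0).card = c := by
    have h1 := Finset.card_eq_sum_card_fiberwise (s := (Finset.univ : Finset (ZMod n)))
      (t := (Finset.univ : Finset (ZMod h))) (f := ZMod.castHom hd (ZMod h)) (fun _ _ => by simp)
    rw [Finset.sum_congr rfl (fun i _ => key i)] at h1
    simp only [Finset.card_univ, ZMod.card, Finset.sum_const, smul_eq_mul] at h1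
    have hpos : 0 < h := Nat.pos_of_ne_zero (NeZero.ne h)
    apply Nat.eq_of_mul_eq_mul_left hpos
    rw [← h1, ← hc, mul_comm]
  refine Finset.sum_congr rfl fun i _ => ?_
  rw [← key2, ← key i, ← smul_eq_mul, ← Finset.sum_const]
  refine Finset.sum_congr rfl fun j hj => ?_
  simp only [Finset.mem_filter, Finset.mem_univ, true_and] at hj
  rw [hj]

end fold
end NB

namespace NB
set_option linter.unusedSectionVars false

section num

def frc {α : Type} (x : ℕ) (f : ℕ → α) : α :=
  match x with
  | 0 => f 0
  | k+1 => f (k+1)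

theorem frc_eq {α : Type} (x : ℕ) (f : ℕ → α) : frc x f = f x := by
  cases x <;> rfl

def tbl (x : ℕ) : ℕ := (45832594422234749298105850410103375650784739062395034443511311641156132086032 >>> (4 * x)) % 16

def pop : ℕ → ℕ → ℕ
  | 0, _ => 0
  | k+1, m => tbl (m % 64) + pop k (m / 64)

def bt (m i : ℕ) : ℕ := (m.testBit i).toNat

theorem tbl_eq : ∀ x < 64, tbl x = ∑ i ∈ Finset.range 6, bt x i := by decide +kernel

theorem pop_eq (k m : ℕ) : pop k m = ∑ i ∈ Finset.range (6 * k), bt m i := by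
  induction k generalizing m with
  | zero => simp [pop]
  | succ k ih =>
    rw [pop, ih, tbl_eq _ (Nat.mod_lt _ (by norm_num)), Nat.mul_succ, Nat.add_comm (6 * k) 6, Finset.sum_range_add]
    congr 1
    · refine Finset.sum_congr rfl fun i hi => ?_
      have h6 : i < 6 := Finset.mem_range.mp hi
      unfold bt
      rw [show (64 : ℕ) = 2 ^ 6 by norm_num, Nat.testBit_mod_two_pow]
      simp [h6]
    · refine Finset.sum_congr rfl fun i hi => ?_
      unfold bt
      rw [show (64 : ℕ) = 2 ^ 6 by norm_num, Nat.testBit_div_two_pow, Nat.add_comm]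

variable {n : ℕ} [NeZero n]

def dec (n : ℕ) (m : ℕ) : E n := fun i => if m.testBit i.val then 1 else 0

theorem dec_xor (a b : ℕ) : dec n (a ^^^ b) = dec n a + dec n b := by
  refine E_ext fun i => ?_
  rw [add_ap]
  simp only [dec, Nat.testBit_xor]
  cases a.testBit i.val <;> cases b.testBit i.val <;> decide

theorem dec_zero : dec n 0 = 0 := by
  refine E_ext fun i => ?_
  simp [dec, zero_ap]

theorem dec_one : dec n 1 = 1 := by
  refine E_ext fun i => ?_
  rw [show (1:ℕ) = 2 ^ 0 from rfl]
  simp only [dec, one_ap, Nat.testBit_two_pow]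
  by_cases h : i = 0
  · simp [h]
  · have : i.val ≠ 0 := by rwa [Ne, ZMod.val_eq_zero]
    simp [h, Ne.symm this]

theorem wt_dec (m : ℕ) : wt (dec n m) = ∑ i ∈ Finset.range n, bt m i := by
  unfold wt
  obtain ⟨k, rfl⟩ : ∃ k, n = k + 1 := ⟨n - 1, (Nat.succ_pred (NeZero.ne n)).symm⟩
  rw [← Fin.sum_univ_eq_sum_range]
  refine Finset.sum_congr rfl fun i _ => ?_
  unfold dec bt
  change (if m.testBit i.val then (1 : ZMod 2) else 0).val = (m.testBit i.val).toNat
  cases m.testBit i.val <;> rfl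

theorem wt_pop (k : ℕ) (hk : n = 6 * k) (m : ℕ) : wt (dec n m) = pop k m := by
  rw [wt_dec, pop_eq, hk]

def rot (n m s : ℕ) : ℕ := ((m <<< s) % 2 ^ n) ^^^ ((m % 2 ^ n) >>> (n - s))

theorem rot_spec (s : ℕ) : ∃ k : ZMod n, ∀ m, dec n (rot n m s) = X k * dec n m := by
  rcases Nat.lt_or_ge s n with hs | hs
  · refine ⟨(s : ZMod n), fun m => E_ext fun i => ?_⟩
    rw [X_mul]
    unfold dec rot
    congr 2
    have hi : i.val < n := ZMod.val_lt i
    have hsv : (s : ZMod n).val = s := ZMod.val_natCast_of_lt hs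
    rw [Nat.testBit_xor, Nat.testBit_mod_two_pow, Nat.testBit_shiftLeft, Nat.testBit_shiftRight, Nat.testBit_mod_two_pow]
    rcases Nat.lt_or_ge i.val s with h | h
    · have h1 : (i - (s : ZMod n)).val = n - s + i.val := by
        have : i - (s : ZMod n) = ((n - s + i.val : ℕ) : ZMod n) := by
          rw [Nat.cast_add, Nat.cast_sub hs.le]; simp; ring
        rw [this, ZMod.val_natCast_of_lt (by omega)]
      have h2 : n - s + i.val < n := by omega
      simp [hi, h1, h2, Nat.not_le.mpr h]
    · have h1 : (i - (s : ZMod n)).val = i.val - s := by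
        rw [ZMod.val_sub (by rw [hsv]; exact h), hsv]
      have h2 : ¬ (n - s + i.val < n) := by omega
      simp [hi, h1, h2, h]
  · refine ⟨0, fun m => ?_⟩
    rw [X_zero, one_mul]
    refine E_ext fun i => ?_
    have hi : i.val < n := ZMod.val_lt i
    unfold dec rot
    congr 2
    rw [Nat.testBit_xor, Nat.testBit_mod_two_pow, Nat.testBit_shiftLeft, Nat.testBit_shiftRight, Nat.testBit_mod_two_pow]
    have : ¬ (s ≤ i.val) := by omega
    have h3 : n - s = 0 := by omega
    simp [this, h3, hi]

theorem rot_mul (m s : ℕ) : dec n (rot n m s) = dec n (rot n 1 s) * dec n m := by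
  obtain ⟨k, hk⟩ := rot_spec (n := n) s
  rw [hk, hk, dec_one, mul_one]

/-- word parser -/
def word (n r : ℕ) : ℕ → ℕ → ℕ → ℕ → ℕ × ℕ × ℕ
  | 0, h, a, b => (h, a, b)
  | f+1, h, a, b =>
    match Nat.beq (h % 64) 0 with
    | true => (h / 64, a, b)
    | false => frc (a ^^^ rot n 1 (h % 64)) fun a' => frc (b ^^^ rot n r (h % 64)) fun b' =>
        frc (h / 64) fun h' => word n r f h' a' b'

theorem word_spec (r f h a b : ℕ) (hab : dec n b = dec n a * dec n r) :
    dec n (word n r f h a b).2.2 = dec n (word n r f h a b).2.1 * dec n r := by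
  induction f generalizing h a b with
  | zero => exact hab
  | succ f ih =>
    rw [word]
    split
    · exact hab
    · simp only [frc_eq]
      apply ih
      rw [dec_xor, dec_xor, rot_mul r, hab, add_mul]

/-- the killing relation -/
def PP (t1 t2 : E n) : Prop := ∃ b1 b2 : E n, b2 * t1 = b1 * t2 ∧ ep b1 ≠ ep b2

theorem PP_ep {t1 t2 : E n} (h : ep t1 ≠ ep t2) : PP t1 t2 := ⟨t1, t2, mul_comm _ _, h⟩
theorem PP_zero (t1 : E n) : PP t1 0 := ⟨1, 0, by simp, by
  rw [← X_zero, ep_X]; simp [ep, zero_ap]⟩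
theorem PP_D {s1 s2 : E n} (d : E n) (h : PP s1 s2) : PP (d * s1) (d * s2) := by
  obtain ⟨b1, b2, h1, h2⟩ := h
  exact ⟨b1, b2, by rw [mul_left_comm, h1, mul_left_comm], h2⟩
theorem PP_T {s1 s2 : E n} (d : E n) (hd : ep d = 1) (h : PP (d * s1) (d * s2)) : PP s1 s2 := by
  obtain ⟨b1, b2, h1, h2⟩ := h
  refine ⟨b1 * d, b2 * d, by rw [mul_assoc, h1, mul_assoc], ?_⟩
  rw [ep_mul, ep_mul, hd, mul_one, mul_one]; exact h2

def psum (n t : ℕ) : ℕ :=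
  frc (t ^^^ (t <<< 1)) fun t => frc (t ^^^ (t <<< 2)) fun t => frc (t ^^^ (t <<< 4)) fun t =>
  frc (t ^^^ (t <<< 8)) fun t => frc (t ^^^ (t <<< 16)) fun t => frc (t ^^^ (t <<< 32)) fun t => t % 2 ^ n

def lp (n p : ℕ) : ℕ → ℕ → ℕ → Bool
  | 0, _, _ => false
  | f+1, t1, t2 =>
    match Nat.beq t2 0 with
    | true => true
    | false =>
    match Nat.beq (pop p t1 % 2) (pop p t2 % 2) with
    | false => true
    | true => frc (psum n t1) fun d1 => frc (psum n t2) fun d2 =>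
      match Nat.beq (d1 ^^^ rot n d1 1) t1 && Nat.beq (d2 ^^^ rot n d2 1) t2 with
      | true => lp n p f d1 d2
      | false => false

theorem lp_spec (p f t1 t2 : ℕ) (hp : n = 6 * p) (h : lp n p f t1 t2 = true) : PP (dec n t1) (dec n t2) := by
  induction f generalizing t1 t2 with
  | zero => simp [lp] at h
  | succ f ih =>
    rw [lp] at h
    split at h
    · next h0 =>
      rw [Nat.eq_of_beq_eq_true h0, dec_zero]; exact PP_zero _
    · split at h
      · next h0 =>
        apply PP_ep
        rw [ep_wt, ep_wt, wt_pop p hp, wt_pop p hp]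
        intro hh
        rw [ZMod.natCast_eq_natCast_iff] at hh
        have := Nat.ne_of_beq_eq_false h0
        exact this hh
      · simp only [frc_eq] at h
        split at h
        · next h0 =>
          rw [Bool.and_eq_true] at h0
          have h1 := Nat.eq_of_beq_eq_true h0.1
          have h2 := Nat.eq_of_beq_eq_true h0.2
          have := PP_D (1 + dec n (rot n 1 1)) (ih _ _ h)
          rw [add_mul, add_mul, one_mul, one_mul, ← rot_mul, ← rot_mul, ← dec_xor, ← dec_xor, h1, h2] at this
          exact this
        · simp at h

def tri (n t : ℕ) : ℕ := t ^^^ rot n t (n / 3) ^^^ rot n t (n / 3 * 2)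

theorem tri_spec : ∃ d : E n, ep d = 1 ∧ ∀ t, dec n (tri n t) = d * dec n t := by
  obtain ⟨k, hk⟩ := rot_spec (n := n) (n / 3)
  obtain ⟨l, hl⟩ := rot_spec (n := n) (n / 3 * 2)
  refine ⟨1 + X k + X l, ?_, fun t => ?_⟩
  · rw [ep_add, ep_add, ← X_zero, ep_X, ep_X, ep_X]; decide
  · rw [tri, dec_xor, dec_xor, hk, hl]; ring

/-- consume a hint, verify that `r` is killed -/
def chk (n p c r h : ℕ) : Option ℕ :=
  match word n r 9 h 1 r with
  | (h1, a1, b1) =>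
    match Nat.beq (pop p a1) 0 with
    | true => none
    | false =>
    frc (c * (pop p a1 + pop p b1)) fun w1 =>
    match Nat.ble w1 15, Nat.beq w1 16 with
    | true, _ => some h1
    | false, false => none
    | false, true =>
      match word n r 9 h1 1 r with
      | (h2, a2, b2) =>
        match Nat.beq (pop p a2) 0, Nat.beq (c * (pop p a2 + pop p b2)) 16, lp n p 17 (tri n a1) (tri n a2) with
        | false, true, true => some h2
        | _, _, _ => none

end num

section hyp
variable {n : ℕ} [NeZero n]

/-- The working hypothesis. -/
def Hyp (c : ℕ) (r : E n) : Prop :=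
  r * st r = 1 ∧ ∃ φ : E n → ZMod 2, (∀ a b, φ (a + b) = φ a + φ b) ∧
    ∀ a, a ≠ 0 → 16 ≤ c * (wt a + wt (a * r)) ∧ (c * (wt a + wt (a * r)) = 16 → φ a = 1)

theorem wt_zero : wt (0 : E n) = 0 := by simp [wt, zero_ap]

theorem phi_low {φ : E n → ZMod 2} (hφ : ∀ a b, φ (a + b) = φ a + φ b) (a : E n) (h : ∀ k, φ (X k * a) = 1) (b : E n) :
    φ (b * a) = ep b := by
  have h0 : φ 0 = 0 := by simpa using hφ 0 0
  let F : E n →+ ZMod 2 := ⟨⟨φ, h0⟩, hφ⟩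
  have h1 : b * a = ∑ k, (if b k = 1 then X k else 0) * a := by
    rw [← Finset.sum_mul, ← expand]
  have h2 : φ (b * a) = ∑ k, φ ((if b k = 1 then X k else 0) * a) := by
    rw [h1]; exact map_sum F _ _
  rw [h2]
  refine Finset.sum_congr rfl fun k _ => ?_
  rcases val_eq_zero_or (b k) with hb | hb
  · simp [hb, h0]
  · simp [hb, h]

theorem X_mul_ne {a : E n} (ha : a ≠ 0) (k : ZMod n) : X k * a ≠ 0 := by
  intro h
  apply ha
  calc a = X (-k) * (X k * a) := by rw [← mul_assoc, X_add, neg_add_cancel, X_zero, one_mul]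
    _ = 0 := by rw [h, mul_zero]

theorem Hyp_kill {c : ℕ} {r a1 a2 : E n} (H : Hyp c r) (h1 : a1 ≠ 0) (h2 : a2 ≠ 0)
    (w1 : c * (wt a1 + wt (a1 * r)) = 16) (w2 : c * (wt a2 + wt (a2 * r)) = 16) (hP : PP a1 a2) : False := by
  obtain ⟨_, φ, hφ, H⟩ := H
  have key : ∀ a : E n, a ≠ 0 → c * (wt a + wt (a * r)) = 16 → ∀ b, φ (b * a) = ep b := by
    intro a ha hw
    apply phi_low hφ
    intro k
    apply (H _ (X_mul_ne ha k)).2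
    rw [mul_assoc, wt_X_mul, wt_X_mul, hw]
  obtain ⟨b1, b2, e, hne⟩ := hP
  apply hne
  rw [← key a2 h2 w2, ← e, key a1 h1 w1]

theorem chk_spec (p : ℕ) (hp : n = 6 * p) (c r h h' : ℕ) (hc : chk n p c r h = some h') : ¬ Hyp c (dec n r) := by
  intro H
  unfold chk at hc
  have ne : ∀ a, Nat.beq (pop p a) 0 = false → dec n a ≠ 0 := by
    intro a ha h0
    have := Nat.ne_of_beq_eq_false ha
    rw [← wt_pop p hp, h0, wt_zero] at this
    exact this rfl
  have one : ∀ h, dec n (word n r 9 h 1 r).2.2 = dec n (word n r 9 h 1 r).2.1 * dec n r := by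
    intro h; apply word_spec; rw [dec_one, one_mul]
  have o1 := one h
  generalize word n r 9 h 1 r = q1 at hc o1
  obtain ⟨h1, a1, b1⟩ := q1
  simp only at hc o1
  split at hc
  · simp at hc
  next n1 =>
  simp only [frc_eq] at hc
  split at hc
  · next e1 =>
    have := Nat.le_of_ble_eq_true e1
    have h3 := (H.2.choose_spec.2 _ (ne _ n1)).1
    rw [← o1, wt_pop p hp, wt_pop p hp] at h3
    omega
  · simp at hc
  · next e1 e2 =>
    have e2 := Nat.eq_of_beq_eq_true e2
    have o2 := one h1
    generalize word n r 9 h1 1 r = q2 at hc o2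
    obtain ⟨h2, a2, b2⟩ := q2
    simp only at hc o2
    split at hc
    · next n2 e3 l =>
      have e3 := Nat.eq_of_beq_eq_true e3
      refine Hyp_kill H (ne _ n1) (ne _ n2) ?_ ?_ ?_
      · rw [← o1, wt_pop p hp, wt_pop p hp, e2]
      · rw [← o2, wt_pop p hp, wt_pop p hp, e3]
      · obtain ⟨d, hd, hdd⟩ := tri_spec (n := n)
        apply PP_T d hd
        rw [← hdd, ← hdd]
        exact lp_spec p _ _ _ hp l
    · simp at hc

/-- reachable -/
def Rch : List ℕ → E n → E n → Prop
  | [], y, x => x = y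
  | B :: Bs, y, x => Rch Bs y x ∨ Rch Bs (y + dec n B) x

/-- traversal with hint stream -/
def go {S : Type} (leaf : ℕ → S → Option S) : List ℕ → ℕ → S → Option S
  | [], r, h => leaf r h
  | B :: Bs, r, h =>
    match go leaf Bs r h with
    | none => none
    | some h' => frc (r ^^^ B) fun r' => go leaf Bs r' h'

theorem go_spec {S : Type} (leaf : ℕ → S → Option S) (Q : E n → Prop)
    (hl : ∀ r h h', leaf r h = some h' → Q (dec n r)) (Bs : List ℕ) (r : ℕ) (h h1 : S)
    (e : go leaf Bs r h = some h1) (x : E n) (hx : Rch Bs (dec n r) x) : Q x := by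
  induction Bs generalizing r h h1 with
  | nil => rw [hx]; exact hl _ _ _ e
  | cons B Bs ih =>
    rw [go] at e
    split at e
    · simp at e
    · next h2 e2 =>
      rw [frc_eq] at e
      rcases hx with hx | hx
      · exact ih _ _ _ e2 hx
      · rw [← dec_xor] at hx
        exact ih _ _ _ e hx

end hyp
end NB

namespace NB
set_option linter.unusedSectionVars false

section inv
variable {n : ℕ} [NeZero n]

theorem Hyp_X {c : ℕ} {r : E n} (H : Hyp c r) (k : ZMod n) : Hyp c (X k * r) := by
  obtain ⟨h1, φ, hφ, H⟩ := H
  refine ⟨?_, φ, hφ, fun a ha => ?_⟩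
  · rw [st_mul, st_X]
    calc X k * r * (X (-k) * st r) = (X k * X (-k)) * (r * st r) := by ring
      _ = 1 := by rw [h1, X_add, add_neg_cancel, X_zero, one_mul]
  · rw [mul_left_comm, wt_X_mul]; exact H a ha

theorem mu_add (u : ZMod n) (a b : E n) : mu u (a + b) = mu u a + mu u b := rfl
theorem mu_zero (u : ZMod n) : mu u (0 : E n) = 0 := rfl

theorem Hyp_mu {c : ℕ} {r : E n} (H : Hyp c r) {u v : ZMod n} (huv : u * v = 1) : Hyp c (mu u r) := by
  obtain ⟨h1, φ, hφ, H⟩ := H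
  have hvu : v * u = 1 := by rw [mul_comm, huv]
  refine ⟨?_, fun a => φ (mu v a), fun a b => hφ (mu v a) (mu v b), fun a ha => ?_⟩
  · rw [← mu_st, ← mu_mul huv, h1, mu_one huv]
  · have hne : mu v a ≠ 0 := by
      intro h0
      apply ha
      rw [← mu_mu huv a, h0, mu_zero]
    have := H _ hne
    have e : a * mu u r = mu u (mu v a * r) := by rw [mu_mul huv, mu_mu huv]
    rw [e, wt_mu huv]
    rwa [wt_mu hvu] at this

end inv

theorem two_eq {n : ℕ} [NeZero n] : (2 : E n) = 0 := by
  rw [← one_add_one_eq_two, add_self]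

section two
variable {n h : ℕ} [NeZero n] [NeZero h] (hd : h ∣ n)

theorem Hyp_fo (hn : 2 * h = n) {c : ℕ} {r : E n} (H : Hyp c r) : Hyp (c * 2) (fo hd r) := by
  obtain ⟨h1, φ, hφ, H⟩ := H
  refine ⟨by rw [← fo_st, ← fo_mul, h1, fo_one], fun a => φ (io hd a), fun a b => hφ (io hd a) (io hd b), fun a ha => ?_⟩
  have hne : io hd a ≠ 0 := fun h0 => ha (io_inj hd h0)
  have := H _ hne
  rw [io_mul, wt_io hd 2 hn, wt_io hd 2 hn] at this
  rwa [mul_assoc, mul_add]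

variable (hio : (io hd 1 : E n) = 1 + X (h : ZMod n)) (hk : ∀ k : ZMod n, k = -k → k = 0 ∨ k = h)
  (h2 : (h : ZMod n) + h = 0) (h0 : (h : ZMod n) ≠ 0)

/-- integral autocorrelation -/
def Ac (r : E n) (k : ZMod n) : ℕ := ∑ i, (r i).val * (r (i + k)).val

theorem Ac_neg (r : E n) (k) : Ac r (-k) = Ac r k := by
  unfold Ac
  refine Fintype.sum_equiv (Equiv.subRight k) _ _ fun i => ?_
  simp [mul_comm, sub_eq_add_neg]

theorem Ac_zero (r : E n) : Ac r 0 = wt r := by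
  unfold Ac wt
  refine Finset.sum_congr rfl fun i _ => ?_
  rw [add_zero]
  rcases val_eq_zero_or (r i) with h | h <;> rw [h] <;> rfl

theorem Ac_sum (r : E n) : ∑ k, Ac r k = wt r ^ 2 := by
  unfold Ac wt
  rw [Finset.sum_comm, sq, Finset.sum_mul]
  refine Finset.sum_congr rfl fun i _ => ?_
  rw [← Finset.mul_sum]
  congr 1
  exact Fintype.sum_equiv (Equiv.addLeft i) _ _ fun k => rfl

theorem Ac_cast (r : E n) (k) : ((Ac r k : ℕ) : ZMod 2) = (r * st r) k := by
  rw [← Ac_neg, mul_ap]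
  unfold Ac st
  push_cast
  refine Finset.sum_congr rfl fun i _ => ?_
  rw [ZMod.natCast_zmod_val, ZMod.natCast_zmod_val]
  congr 2; ring

theorem ep_st (a : E n) : ep (st a) = ep a :=
  Fintype.sum_equiv (Equiv.neg _) _ _ fun _ => rfl

include hio hk h2 h0 in
theorem wt_fo_mod (hn : 2 * h = n) (r : E n) (hr : r * st r = 1) : wt (fo hd r) % 4 = 1 := by
  have hodd : wt r % 2 = 1 := by
    have h1 : ep r * ep r = 1 := by
      have e := congrArg ep hr
      rwa [ep_mul, ep_st, ← X_zero, ep_X] at e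
    have h3 : ep r = 1 := by
      rcases val_eq_zero_or (ep r) with h | h
      · rw [h] at h1; simp at h1
      · exact h
    rw [ep_wt] at h3
    have := (ZMod.natCast_eq_natCast_iff (wt r) 1 2).mp (by simpa using h3)
    exact this
  have hA : wt (fo hd r) + Ac r h = wt r := by
    have e1 := wt_io hd 2 hn (fo hd r)
    have e2 : wt (io hd (fo hd r)) + 2 * Ac r h = 2 * wt r := by
      rw [io_fo, hio, add_mul, one_mul]
      have e3 : wt r = ∑ i : ZMod n, (r (i + h)).val := by
        unfold wt
        exact (Fintype.sum_equiv (Equiv.addRight (h : ZMod n)) _ _ fun k => rfl).symm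
      rw [two_mul (wt r)]
      conv_rhs => rw [e3]
      rw [← e3]
      nth_rewrite 2 [e3]
      unfold wt Ac
      rw [Finset.mul_sum, ← Finset.sum_add_distrib, ← Finset.sum_add_distrib]
      refine Finset.sum_congr rfl fun i _ => ?_
      rw [add_ap, X_mul, show i - (h : ZMod n) = i + h by
        rw [sub_eq_iff_eq_add, add_assoc, h2, add_zero]]
      generalize r i = x
      generalize r (i + h) = y
      revert x y; decide
    omega
  have hS : ((wt r : ℕ) : ZMod 4) ^ 2 = (wt r : ZMod 4) + (Ac r h : ZMod 4) := by
    have e1 : ((wt r : ℕ) : ZMod 4) ^ 2 = ∑ k : ZMod n, (Ac r k : ZMod 4) := by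
      rw [← Nat.cast_pow, ← Ac_sum, Nat.cast_sum]
    rw [e1, ← Finset.sum_sdiff (Finset.subset_univ ({0, (h : ZMod n)} : Finset (ZMod n))),
      Finset.sum_pair (Ne.symm h0), Ac_zero]
    rw [Finset.sum_involution (fun k _ => -k), zero_add]
    · intro k hk'
      simp only [Finset.mem_sdiff, Finset.mem_univ, true_and, Finset.mem_insert, Finset.mem_singleton, not_or] at hk'
      rw [Ac_neg]
      have : ((Ac r k : ℕ) : ZMod 2) = 0 := by
        rw [Ac_cast, hr, one_ap, if_neg hk'.1]
      rw [ZMod.natCast_eq_zero_iff] at this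
      obtain ⟨q, hq⟩ := this
      rw [hq]; push_cast
      rw [← two_mul, ← mul_assoc]
      have : (2 * 2 : ZMod 4) = 0 := by decide
      rw [this, zero_mul]
    · intro k hk' _ hh
      simp only [Finset.mem_sdiff, Finset.mem_univ, true_and, Finset.mem_insert, Finset.mem_singleton, not_or] at hk'
      rcases hk k hh.symm with h | h
      · exact hk'.1 h
      · exact hk'.2 h
    · intro k hk'
      simp only [Finset.mem_sdiff, Finset.mem_univ, true_and, Finset.mem_insert, Finset.mem_singleton, not_or] at hk' ⊢
      refine ⟨fun e => hk'.1 (neg_eq_zero.mp e), fun e => hk'.2 ?_⟩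
      rw [← neg_neg k, e]
      rw [neg_eq_iff_add_eq_zero, h2]
    · intro k hk'; exact neg_neg k
  have e : (wt r ^ 2) % 4 = (wt r + Ac r h) % 4 := by
    have := (ZMod.natCast_eq_natCast_iff (wt r ^ 2) (wt r + Ac r h) 4).mp (by push_cast; exact hS)
    exact this
  have e' : (wt r ^ 2) % 4 = 1 := by
    rcases (by omega : wt r % 4 = 1 ∨ wt r % 4 = 3) with h | h <;> simp [Nat.pow_mod, h]
  omega

include h2 h0 hio in
theorem lift_w (r r1 : E n) (hr : r * st r = 1) (hr1 : r1 * st r1 = 1) (hf : fo hd r = fo hd r1) :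
    ∃ w : E n, (∀ i, w (i + h) = w i) ∧ (∀ i, w (-i) = w i) ∧ r = r1 + w * r1 := by
  set u := r * st r1 with hu
  have hfu : fo hd u = 1 := by
    rw [hu, fo_mul, hf, fo_st, ← fo_st, ← fo_mul, hr1, fo_one]
  have hw0 : fo hd (u + 1) = 0 := by rw [fo_add, hfu, fo_one, add_self]
  have hper : ∀ i, (u + 1) (i + h) = (u + 1) i := by
    intro i
    have e := congrFun (io_fo hd (u + 1)) (i + h)
    rw [hw0, io_zero, hio, add_mul, one_mul, add_ap, X_mul, zero_ap, add_sub_cancel_right] at e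
    exact (CharTwo.add_eq_zero.mp e.symm)
  have huu : u * st u = 1 := by
    rw [hu, st_mul, st_st]
    calc r * st r1 * (st r * r1) = (r * st r) * (r1 * st r1) := by ring
      _ = 1 := by rw [hr, hr1, one_mul]
  have hww : (u + 1) * st (u + 1) = 0 := by
    refine E_ext fun i => ?_
    rw [mul_ap, zero_ap]
    refine Finset.sum_involution (fun j _ => j + (h : ZMod n)) ?_ ?_ ?_ ?_
    · intro j _
      have : st (u + 1) (i - (j + (h : ZMod n))) = st (u + 1) (i - j) := by
        unfold st
        rw [show -(i - (j + (h : ZMod n))) = -(i - j) + (h : ZMod n) by ring, hper]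
      rw [hper, this]; exact CharTwo.add_self_eq_zero _
    · intro j _ _ e
      exact h0 (by simpa using e)
    · intro j _; simp
    · intro j _; rw [add_assoc, h2, add_zero]
  have hsym : st (u + 1) = u + 1 := by
    have e : (u + 1) * st (u + 1) = u * st u + (u + st u) + 1 := by rw [st_add, st_one]; ring
    rw [hww, huu] at e
    rw [st_add, st_one]
    linear_combination (-1 : E n) * e + (- u - 1) * (two_eq : (2 : E n) = 0)
  refine ⟨u + 1, hper, fun i => congrFun hsym i, ?_⟩
  have : u * r1 = r := by
    rw [hu, mul_assoc, mul_comm (st r1), hr1, mul_one]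
  rw [add_mul, this, one_mul, add_comm r, ← add_assoc, add_self, zero_add]

def bm (n h m j : ℕ) : ℕ :=
  if j = 0 ∨ 2 * j = h then rot n m j ^^^ rot n m (j + h)
  else rot n m j ^^^ rot n m (n - j) ^^^ rot n m (j + h) ^^^ rot n m (h - j)

theorem bm_mul (m j : ℕ) : dec n (bm n h m j) = dec n (bm n h 1 j) * dec n m := by
  unfold bm
  split_ifs
  · rw [dec_xor, dec_xor, rot_mul m, rot_mul m (j + h)]; ring
  · simp only [dec_xor]
    rw [rot_mul m, rot_mul m (n - j), rot_mul m (j + h), rot_mul m (h - j)]; ring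

def cl (h i : ℕ) : ℕ := min (i % h) (h - i % h)

theorem Rch_sum (w : ℕ → ZMod 2) (B : ℕ → ℕ) (js : List ℕ) (y : E n) :
    Rch (js.map B) y (y + (js.map fun j => if w j = 1 then dec n (B j) else 0).sum) := by
  induction js generalizing y with
  | nil => simp [Rch]
  | cons j js ih =>
    simp only [List.map_cons, List.sum_cons, Rch]
    by_cases hw : w j = 1
    · right; rw [if_pos hw, ← add_assoc]; exact ih _
    · left; rw [if_neg hw, zero_add]; exact ih _

theorem lsum_ap (L : List (E n)) (i) : L.sum i = (L.map fun x => x i).sum := by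
  induction L with
  | nil => rfl
  | cons a L ih => rw [List.sum_cons, add_ap, ih, List.map_cons, List.sum_cons]

theorem lsum_mul (L : List ℕ) (f : ℕ → E n) (b : E n) : (L.map f).sum * b = (L.map fun j => f j * b).sum := by
  induction L with
  | nil => simp
  | cons a L ih => simp only [List.map_cons, List.sum_cons, add_mul, ih]

include h2 h0 hio in
theorem lift_Rch (K : ℕ) (hcl : ∀ i : ZMod n, ((cl h i.val : ℕ) : ZMod n) = i ∨ ((cl h i.val : ℕ) : ZMod n) = i + h ∨
      ((cl h i.val : ℕ) : ZMod n) = -i ∨ ((cl h i.val : ℕ) : ZMod n) = -i + h)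
    (hK : ∀ i : ZMod n, cl h i.val < K + 1)
    (hS : ∀ j ∈ List.range (K + 1), ∀ i : ZMod n, (bm n h 1 j).testBit i.val = decide (cl h i.val = j))
    (hS0 : dec n (bm n h 1 0) = 1 + X (h : ZMod n))
    (r : E n) (m : ℕ) (hr : r * st r = 1) (hr1 : dec n m * st (dec n m) = 1) (hf : fo hd r = fo hd (dec n m)) :
    Rch ((List.range' 1 K).map (bm n h m)) (dec n m) r ∨
    Rch ((List.range' 1 K).map (bm n h m)) (dec n m) (X h * r) := by
  obtain ⟨w, hp, hs, e⟩ := lift_w hd hio h2 h0 r _ hr hr1 hf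
  have hwc : ∀ i : ZMod n, w (cl h i.val : ℕ) = w i := by
    intro i
    rcases hcl i with h | h | h | h <;> rw [h]
    · rw [hp]
    · rw [hs]
    · rw [hp, hs]
  have hw : w = ((List.range (K + 1)).map fun j : ℕ => if w j = 1 then dec n (bm n h 1 j) else 0).sum := by
    refine E_ext fun i => ?_
    rw [lsum_ap, List.map_map, ← hwc i]
    have : ((List.range (K + 1)).map ((fun x : E n => x i) ∘ fun j : ℕ => if w j = 1 then dec n (bm n h 1 j) else 0))
       = (List.range (K + 1)).map (fun j : ℕ => if j = cl h i.val then w (cl h i.val : ℕ) else 0) := by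
      refine List.map_congr_left fun j hj => ?_
      have := hS j hj i
      simp only [Function.comp]
      by_cases hj2 : j = cl h i.val
      · rw [if_pos hj2, ← hj2]
        rcases val_eq_zero_or (w j) with h | h
        · rw [h]; rfl
        · rw [h, if_pos rfl]; unfold dec; rw [this, hj2]; simp
      · rw [if_neg hj2]
        split_ifs
        · unfold dec; rw [this]; simp [Ne.symm hj2]
        · rfl
    rw [this]
    have : ∀ (c : ℕ) (z : ZMod 2) (L : ℕ), c < L → ((List.range L).map (fun j => if j = c then z else 0)).sum = z := by
      intro c z L hL
      have e : ((List.range L).map (fun j => if j = c then z else 0)).sum = ∑ j ∈ Finset.range L, if j = c then z else 0 := rfl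
      rw [e, Finset.sum_ite_eq', if_pos (Finset.mem_range.mpr hL)]
    exact (this _ _ _ (hK i)).symm
  have hw' : w = (if w 0 = 1 then dec n (bm n h 1 0) else 0) +
     ((List.range' 1 K).map fun j : ℕ => if w j = 1 then dec n (bm n h 1 j) else 0).sum := by
    conv_lhs => rw [hw]
    rw [List.range_eq_range', List.range'_succ, List.map_cons, List.sum_cons]; simp
  have key := Rch_sum (n := n) (fun j => w (j : ℕ)) (bm n h m) (List.range' 1 K) (dec n m)
  have hsum : ((List.range' 1 K).map fun j : ℕ => if w j = 1 then dec n (bm n h m j) else 0).sum =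
    ((List.range' 1 K).map fun j : ℕ => if w j = 1 then dec n (bm n h 1 j) else 0).sum * dec n m := by
    rw [lsum_mul]
    congr 1
    refine List.map_congr_left fun j hj => ?_
    rw [bm_mul]; split_ifs
    · rfl
    · rw [zero_mul]
  rw [hsum] at key
  by_cases h1 : w 0 = 1
  · right
    rw [if_pos h1, hS0] at hw'
    convert key using 1
    rw [e]
    have hX : X (h : ZMod n) * w = w := by
      refine E_ext fun i => ?_
      rw [X_mul, ← hp, sub_add_cancel]
    generalize ((List.range' 1 K).map fun j : ℕ => if w j = 1 then dec n (bm n h 1 j) else 0).sum = z at hw' ⊢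
    linear_combination dec n m * hX + dec n m * hw' + X (h : ZMod n) * dec n m * (two_eq : (2 : E n) = 0)
  · left
    rw [if_neg h1, zero_add] at hw'
    rw [← hw', ← e] at key
    exact key

end two
end NB

namespace NB
set_option linter.unusedSectionVars false

section num2
variable {n : ℕ} [NeZero n]

theorem rot_lt (s : ℕ) (hs : s < n) (m : ℕ) : dec n (rot n m s) = X (s : ZMod n) * dec n m := by
  refine E_ext fun i => ?_
  rw [X_mul]
  unfold dec rot
  congr 2
  have hi : i.val < n := ZMod.val_lt i
  have hsv : (s : ZMod n).val = s := ZMod.val_natCast_of_lt hs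
  rw [Nat.testBit_xor, Nat.testBit_mod_two_pow, Nat.testBit_shiftLeft, Nat.testBit_shiftRight, Nat.testBit_mod_two_pow]
  rcases Nat.lt_or_ge i.val s with h | h
  · have h1 : (i - (s : ZMod n)).val = n - s + i.val := by
      have : i - (s : ZMod n) = ((n - s + i.val : ℕ) : ZMod n) := by
        rw [Nat.cast_add, Nat.cast_sub hs.le]; simp; ring
      rw [this, ZMod.val_natCast_of_lt (by omega)]
    have h2 : n - s + i.val < n := by omega
    simp [hi, h1, h2, Nat.not_le.mpr h]
  · have h1 : (i - (s : ZMod n)).val = i.val - s := by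
      rw [ZMod.val_sub (by rw [hsv]; exact h), hsv]
    have h2 : ¬ (n - s + i.val < n) := by omega
    simp [hi, h1, h2, h]

def unitb (n p m : ℕ) : Bool :=
  (List.range n).all fun s => Nat.beq (pop p (m &&& rot n m s) % 2) (if s = 0 then 1 else 0)

theorem corr (p m s : ℕ) (hp : n = 6 * p) (hs : s < n) :
    ((pop p (m &&& rot n m s) : ℕ) : ZMod 2) = (dec n m * st (dec n m)) (s : ZMod n) := by
  rw [← wt_pop p hp, ← ep_wt, mul_ap]
  unfold ep
  refine Finset.sum_congr rfl fun i _ => ?_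
  have e := congrFun (rot_lt s hs m) i
  rw [X_mul] at e
  have e2 : dec n (m &&& rot n m s) i = dec n m i * dec n (rot n m s) i := by
    unfold dec
    rw [Nat.testBit_and]
    cases m.testBit i.val <;> cases (rot n m s).testBit i.val <;> simp
  rw [e2, e]
  unfold st
  congr 2; ring

theorem unitb_iff (p m : ℕ) (hp : n = 6 * p) : unitb n p m = true ↔ dec n m * st (dec n m) = 1 := by
  unfold unitb
  rw [List.all_eq_true]
  have key : ∀ s, s < n → (Nat.beq (pop p (m &&& rot n m s) % 2) (if s = 0 then 1 else 0) = true ↔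
      (dec n m * st (dec n m)) (s : ZMod n) = (1 : E n) (s : ZMod n)) := by
    intro s hs
    have h0 : ((s : ZMod n) = 0) ↔ s = 0 := by
      rw [ZMod.natCast_eq_zero_iff]
      exact ⟨fun h => Nat.eq_zero_of_dvd_of_lt h hs, fun h => h ▸ dvd_zero _⟩
    rw [← corr p m s hp hs, one_ap, Nat.beq_eq]
    simp only [h0]
    generalize pop p (m &&& rot n m s) = q
    have := ZMod.natCast_eq_natCast_iff q (if s = 0 then 1 else 0) 2
    constructor
    · intro h
      have h2 := this.mpr (by unfold Nat.ModEq; rw [h]; split_ifs <;> rfl)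
      rw [h2]; split_ifs <;> simp
    · intro h
      have h2 := this.mp (by rw [h]; split_ifs <;> simp)
      unfold Nat.ModEq at h2
      rw [h2]; split_ifs <;> rfl
  constructor
  · intro h
    refine E_ext fun k => ?_
    have := (key k.val (ZMod.val_lt k)).mp (h _ (List.mem_range.mpr (ZMod.val_lt k)))
    rwa [ZMod.natCast_zmod_val] at this
  · intro h s hs
    rw [key s (List.mem_range.mp hs), h]

def mum (n u m : ℕ) : ℕ → ℕ
  | 0 => 0
  | i+1 => frc (mum n u m i) fun q => q ^^^ (((m >>> (u * i % n)) % 2) <<< i)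

theorem mum_testBit (u m k i : ℕ) : (mum n u m k).testBit i = (decide (i < k) && m.testBit (u * i % n)) := by
  induction k with
  | zero => simp [mum]
  | succ k ih =>
    rw [mum, frc_eq, Nat.testBit_xor, ih, Nat.testBit_shiftLeft]
    have h2 : ∀ x : ℕ, x % 2 = x % 2 ^ 1 := fun x => by norm_num
    rw [h2, Nat.testBit_mod_two_pow, Nat.testBit_shiftRight]
    rcases Nat.lt_trichotomy i k with h | h | h
    · simp [h, Nat.not_le.mpr h, Nat.lt_succ_of_lt h]
    · subst h
      simp
    · have h1 : ¬ i < k := by omega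
      have h2 : ¬ i < k + 1 := by omega
      have h3 : ¬ (i - k < 1) := by omega
      simp [h1, h2, h3]

theorem dec_mum (u m : ℕ) : dec n (mum n u m n) = mu (u : ZMod n) (dec n m) := by
  refine E_ext fun i => ?_
  unfold dec mu
  rw [mum_testBit]
  have : ((u : ZMod n) * i).val = u * i.val % n := by
    rw [ZMod.val_mul, ZMod.val_natCast]; simp
  simp only [this]
  simp [ZMod.val_lt i]

/-- equivalence under shifts and (involutive) multipliers -/
def Red (r t : E n) : Prop := ∃ k u : ZMod n, u * u = 1 ∧ mu u (X k * r) = t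

def eqv (n m k u t : ℕ) : Bool :=
  Nat.beq (u * u % n) 1 && Nat.ble (k + 1) n && Nat.beq (mum n u (rot n m k) n) t

theorem eqv_spec (m k u t : ℕ) (h : eqv n m k u t = true) : Red (dec n m) (dec n t) := by
  unfold eqv at h
  rw [Bool.and_eq_true, Bool.and_eq_true] at h
  obtain ⟨⟨h1, h2⟩, h3⟩ := h
  have h1 := Nat.eq_of_beq_eq_true h1
  have h2 := Nat.le_of_ble_eq_true h2
  have h3 := Nat.eq_of_beq_eq_true h3
  refine ⟨k, u, ?_, ?_⟩
  · rw [← Nat.cast_mul, ← ZMod.natCast_mod, h1, Nat.cast_one]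
  · rw [← h3, dec_mum, rot_lt k h2]

def lvl12 (m : ℕ) : Bool :=
  !(Nat.beq (pop 2 m % 4) 1) || !(unitb 12 2 m) ||
    (List.range 12).any fun k => [1, 5, 7, 11].any fun u => [1, 307, 341, 1759, 157, 327].any fun t => eqv 12 m k u t

def allb (f : ℕ → Bool) : ℕ → ℕ → Bool
  | 0, b => f b
  | k+1, b => allb f k b && frc (b + 2 ^ k) fun b' => allb f k b'

theorem allb_spec (f : ℕ → Bool) (k b : ℕ) (h : allb f k b = true) (m : ℕ) (h1 : b ≤ m) (h2 : m < b + 2 ^ k) : f m = true := by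
  induction k generalizing b with
  | zero =>
    have : m = b := by simp at h2; omega
    rw [this]; exact h
  | succ k ih =>
    rw [allb, frc_eq, Bool.and_eq_true] at h
    rw [pow_succ] at h2
    by_cases hm : m < b + 2 ^ k
    · exact ih b h.1 h1 hm
    · exact ih _ h.2 (by omega) (by omega)

theorem lvl12_all (m : ℕ) (h : m < 4096) : lvl12 m = true :=
  allb_spec lvl12 12 0 (by decide +kernel) m (Nat.zero_le _) (by simpa using h)

theorem dec_surj12 (a : E 12) : ∃ m < 4096, a = dec 12 m := by
  refine ⟨Nat.ofBits (n := 12) (fun i : Fin 12 => a i == 1), Nat.ofBits_lt_two_pow _, ?_⟩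
  refine E_ext fun i => ?_
  unfold dec
  have : i.val < 12 := ZMod.val_lt i
  rw [Nat.testBit_ofBits_lt _ _ this]
  have e : (⟨i.val, this⟩ : Fin 12) = i := rfl
  rw [e]
  rcases val_eq_zero_or (a i) with h | h <;> simp [h]

theorem Red_Hyp {c : ℕ} {r t : E n} (h : Red r t) (H : Hyp c r) : Hyp c t := by
  obtain ⟨k, u, hu, e⟩ := h
  rw [← e]
  exact Hyp_mu (Hyp_X H k) hu

theorem main12 (r : E 12) (H : Hyp 4 r) (hw : wt r % 4 = 1) : Red r (dec 12 157) ∨ Red r (dec 12 327) := by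
  obtain ⟨m, hm, rfl⟩ := dec_surj12 r
  have h := lvl12_all m hm
  rw [wt_pop 2 rfl] at hw
  have hu := (unitb_iff (n := 12) 2 m rfl).mpr H.1
  unfold lvl12 at h
  rw [hw, hu] at h
  simp only [show Nat.beq 1 1 = true from rfl, Bool.not_true, Bool.or_false, Bool.false_or, List.any_eq_true] at h
  obtain ⟨k, -, u, -, t, ht, h⟩ := h
  have hR := eqv_spec m k u t h
  have HH := Red_Hyp hR H
  simp only [List.mem_cons, List.not_mem_nil, or_false] at ht
  rcases ht with rfl | rfl | rfl | rfl | rfl | rfl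
  · exact absurd HH (chk_spec 2 rfl 4 1 0 0 (by decide +kernel))
  · exact absurd HH (chk_spec 2 rfl 4 307 0x4004 0 (by decide +kernel))
  · exact absurd HH (chk_spec 2 rfl 4 341 0x4004 0 (by decide +kernel))
  · exact absurd HH (chk_spec 2 rfl 4 1759 0x6003 0 (by decide +kernel))
  · left; exact hR
  · right; exact hR

/-- leaf at level 24 -/
def leaf24 (r : ℕ) : List ℕ → Option (List ℕ)
  | [] => none
  | h :: hs =>
    match Nat.beq (pop 4 r % 4) 1 with
    | false => some hs
    | true =>
      match Nat.beq (h % 64) 63 with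
      | true => match eqv 24 r (h / 64 % 64) (h / 4096) 84255 with
        | true => some hs
        | false => none
      | false => match chk 24 4 2 r h with
        | none => none
        | some _ => some hs

theorem leaf24_spec (r : ℕ) (h h' : List ℕ) (e : leaf24 r h = some h') :
    Hyp 2 (dec 24 r) → wt (dec 24 r) % 4 = 1 → Red (dec 24 r) (dec 24 84255) := by
  intro H hw
  cases h with
  | nil => simp [leaf24] at e
  | cons h hs =>
    rw [leaf24] at e
    rw [wt_pop 4 rfl] at hw
    split at e
    · next e1 => rw [hw] at e1; simp at e1
    · split at e
      · split at e
        · next e2 => exact eqv_spec _ _ _ _ e2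
        · simp at e
      · split at e
        · simp at e
        · next e2 => exact absurd H (chk_spec 4 rfl _ _ _ _ e2)

def leaf48 (Bs : List ℕ) (r : ℕ) : List ℕ → Option (List ℕ)
  | [] => none
  | h :: hs =>
    match go (fun r h => chk 48 8 1 r h) Bs r h with
    | none => none
    | some _ => some hs

theorem leaf48_spec (Bs : List ℕ) (r : ℕ) (h h' : List ℕ) (e : leaf48 Bs r h = some h') :
    ∀ x : E 48, Rch Bs (dec 48 r) x → ¬ Hyp 1 x := by
  cases h with
  | nil => simp [leaf48] at e
  | cons h hs =>
    rw [leaf48] at e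
    split at e
    · simp at e
    · next e2 =>
      intro x hx
      exact go_spec _ (fun x => ¬ Hyp 1 x) (fun r h h' => chk_spec 8 rfl 1 r h h') _ _ _ _ e2 x hx

def hints157 : List ℕ := [0x408, 0, 0x132c2009101, 0, 0x281, 0, 0x141, 0, 0x9102015381, 0, 0x408, 0, 0x717f, 0, 0x408, 0, 0x142,
  0, 0x101c300e241, 0, 0x408, 0, 0x283, 0, 0xb27f, 0, 0x408, 0, 0xe101009081, 0, 0x408, 0, 0x3c2, 0, 0x383,
  0, 0x101c30080c1, 0, 0x408, 0, 0x408, 0, 0x1347f, 0, 0x408, 0, 0xf2010161c1, 0, 0x141, 0, 0x408, 0, 0xb201009101,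
  0, 0x442, 0, 0x408, 0, 0xf2c10140c1, 0, 0x408, 0, 0x1757f, 0]

def hints327 : List ℕ := [0, 0x152c200d181, 0, 0x408, 0, 0x13301006081, 0, 0x408, 0, 0x1c1, 0, 0x12306012341, 0, 0x408, 0, 0x181,
  0, 0xf142013301, 0, 0x408, 0, 0xa0c1014081, 0, 0x408, 0, 0x481, 0, 0x1230600c1c1, 0, 0x408, 0, 0x4c1,
  0, 0x408, 0, 0xd18100a0c1, 0, 0x408, 0, 0x13301014181, 0, 0x12306012341, 0, 0x485, 0, 0x346, 0, 0x408,
  0, 0x408, 0, 0x163c10101c1, 0, 0x408, 0, 0xd181013141, 0, 0x12306009181, 0, 0x2c5, 0, 0x446, 0, 0x408]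

def hints48 : List ℕ := [0x7d508064304070b08090900094704060c0278410284c100a24102d080a1c0c0a8d0404c40408820267cd08058b0409c10100100221410122008ce1c30407da0406c5040916080340aa40409c80407cd10054c100a1334101a34300c10200c003040300a6794c040893303040a181010282c102648302c7c10111830242406cc0c05520805c80c06c404040040059208034302aa4c18102a8d10810100c1018100a5218084f10090504094202610100c01d28100c02664901a403025402009040a944040408e178304054a04084802b9cd1010251410111802c089520100f1830280c074301d0c02c08cc1807c80407530c050801001002a28202018102a34201930102584101930101a24402d7c201424100e1009d40406cf04078b0c05490c0a9838504084f10095a1410245480216900c0855080a5c0409da1c404064908074f04064602692308102348402518304081a1004004000c0,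
  0xb1434100e2010213005cc08064c04074708034804085c08088d0409a00405ca01a5c6040a8d04088502208081110100d00f3070400800100100203c102a080a9e0c09d70809460c06c40408d020200d244018040a030403003c100c008040a13040b060407550805530808110408110409c91006cc0c07cd04058801024202d20101c34204048c040400400440280a521408920406c604040300d10100c0245c800c0142008e00405c05820216020404ca100b1324301d5450234010100100222010161c0ba70402c070904060802140201f34202a18301f50102a9820122c201f14200d04064c0405070407560c064c04064f1420250803c02870406430405520808890235050213410162470810162c040040078f04048801540a0c030604080802264202458202e38100a1c101b44400302068202d381,
  0x20304030030002274f08044500a01b5450173c201d28102004081a08054b0405c200301648202070102644701e20100714202534101908100e0c07880c07c8040ade1410271c302208034a04068302214201930101930102310091c3030409cf0c09c90806d004074a04074304095f04060701434102528101e40801d5c30256c202a2010164820248410265890203410113420163c10215c204050b140aa0040a52040b870405880c09c30296c402d6410270c00c0b210c064c04064c0405c402d44e04054c04074201b0c06111c03c7040855040b480407830405410277030253820194030271c102d71610101a44600b20101528040404094504034102e64102c1010173820220407840403002c200c0297c301720300a1c101b080ae504048b040a0b04090b0278020227c101b201028141028703040a920802810182c09910c07cc0232c0b4d040,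
  0xb4d04030088200c0103890810265810185c904054080e0805cf040ae504038101f58201c24102e98204058a080ad40c0a890406d704058101b30302d14101b3030287810288c101810100a14201e54102140201928102408101208060300a0810050408d91406ca1409511006c504054c0c068b08040b0403820263820217410280c100b0408dd0409150409500805950408db1009d808080d0401c202858e0c10152c302d48200714201b3430251c20081810131010227430183c20182c101514094102ba010193010206820252410284470171020184020201420257c404095914054a1002809d010024101e38700c24100708101118075810034910075c0c101318202540a0810236820091020202c09944c2040b5304074708040100c0010005c400e20204028204054e08089f040b570803406cc0c09090c064304090902579b14101c3830263c5028040b640408c204050e0408ca01e44301c383017002,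
  0x285430204810152c202a28101508084100c0216c501c4c10282c20409500809142050409980405500805c302574202658101b44201a240a933c30407d014204040040074708071a040aa608090b0122820241410172410240408cf1007560c0b6304038401b58501930101a08100091f102025489005040a0d2820215c60133410245030257420203820080802860c0b66040400400a5b10081a080b6604034102e88e08102724202014202780101f1420193010193010141c10255410142410242c608101b4040404460276010220807100c02030409ce0c054d040a5c0400806d51410234020196020408c804078602758402d5810215410100c101738701e34601001002470200c00d00c01d0c0a560c0709080b650808d10401c50800c089d0407db04060b04060502794508100d1410283010131806cc0c0b230806cc0c0a0d0806460c00407cc04088702574100a010010,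
  0x9d70c0aa20805cb04064b02528080b0403007110c094d04090c04020101608054e10058502d1c202048102348501b3030276c60220810277c502d20102a2820195c1010010015246040a5204038201c34501c18102524100a04084608034804064c04064801b2c50409c91004820204410204410250c10101008d838202108101b100b49080a4404075a08102538200f24402d94101001002068402e40102728508101930100e1010224430193010183c50272c402d1c200b20102b64400b10201318301d6c101034510100d28102e58100e1c07953c20100100220806160401c20253c50231830134010101807970408820406161010275c301228100c00c0050265420162c102c84302a20102040600d24102210101c04098d1408d9040b4904084602470701648201001002d58101c24102788101620078101f50101930081a0809d70808901400c1,
  0x141c05c708064c04064f1c060b0405860c064702b5050c1014181018402018240b4d0409c80403840408c801f6420248410235c801d0c078d18100f1002808c802140c081021240b90383040b540804cf1006cb0c0300080b840403007c5080a1b0407db0810091020160c101502264701954102060b28100f24102068202664102734302728102d9840403880406060122c2009080a8b10008088704060202518302e3410192c202918202471908100f20308102280a08094a10034504030070400c02c5d50810162820172030282c1021549028806025140540a050402c02850405c502758301d24300304004088201928100085c0c06ca080b4c04018102934402824201d28302d68202268201930101930101a14054a08054c04098e0807430204c90153c202658101d140aa304014304044a140b48040547080a04040ad304038202b6440258410266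c10270c06cd0c055308095c080743,
  0x44608064c04048e0c064c04058b282040951100648080b4e0406111c0786040b6608048802c48301c3c301f6d3040206040ad20806d004091504084102034100a1c101f3420162004cc28204068a040808080205080a5d0807cd04095d2820409a008101010100c01b30100c0213060c0b9904004098d1409df0407911c080e080a647c102c50301c24102a48202a28102b50300a0407860252c10090804d238204071304068e0803420252830215810180c10007d71c02809e41820409950810242c064100c0202c101a0c102068202608064a1407960c08e0080a030406cc0c0642040b4e04038302928301a60102c4c201648202790a0c0b64040586040a1b1810258c102948101e6420213c2026682040a1b08064c04070604094b04090b01e40801502d4c20277c101e3c300301a5c20200c102994202374102978200404059208099c0403090401c20258460407c80408090280c0b4b0402c2,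
  0x2374401c34200c20100a02374402b7410267830407990c08cc18081a0808c604090901f34101b10100f34201530101d4420215c102e4ce10101f4860407510c064c04064c04034101a44500e1010171020110c0611100a8d040a170c064100a14100b00a20102d040bac204040954240ad43c204054202728101502b54f0810230807490c0b9904048a080345040349100987080892080b4408060304030040100c01c4c501b40402c7010202c102270400e2010237410220806511008080403c60c084a02548701c24101a08102914048d202040a860c0794282040a0710102d5020102c10192810180403870803006c500c0282c401340101544201b38101b34304098f0c054d0409971c075514048d080349080ae55410171c0080a9234100d10304084608080102d2c10200406d61404040407931400c09060c10215c90193010223c100f0254050254050256c501a3820190c10005490409c804038b141021341,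
  0xb660407cf04061724101f5c202370502824202c54102004090c0c07ce0409cf0c03040807151820407ce1409592840406820162820287010190c101b10064c04014304064c0407030153c300a24101a282012080b112c20406111c0a8d04034502b34101b10101b30302978201c24608074f080b060406d1040403040a4b0400294850252c302588102e58102550902e38102340302340302014200c00510100c01f58f0c0a5d08064a02c7ce04038804088b02234100e20101f58700e20101b30301224301b30302208058302638d04058e040aa608081a08091414100a08101b0c058700c00e1003861010205c100d0409111c0a4502161008101a08102c3c101b140a1b08098e0807d404060201e34604098d08044802a70d08102884201c3c300a1c102664100302578a0810221c204064c040b0404099c0c064c04044d0408850406501004d0040b122420405490c0a5c04028704071a382040987040b1f040648,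
  0x5d00c0a1b04081818099e0c06cc0c0a1e040a1808080e0808112430405cc18008001944301f2810247020282c201001000b0020287c50150217410111c09160808c5040b120c102554100f2c402860202274101c24102270101654102b5420254c10174470810154c10203410080808d00401430406480c02010232c30282c102950100a080400400b9c04064c040b9f5cd04075a0c20409cb14204038918101314095104074d02e9010280c101b20101804044a1409d010051204094302b80d04095f04098200c10202b9410172410220806030174070174070226c20211810294c602634201930101b20101930102c1810100100164820252410221c09460c10203c10227c10190c102424300304098f14080604084f10044d1006c50402809df2810163060285c90c101740701740702b3410211810227c10251c100c00300d1c100c0100100273cd040b06040b57080998040aa60405ca,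
  0x1724401834200a10102128040302664102204034a0405c08110408110406530c059504058c1807cf0406d614030030100c01b14089d0806c50263c302a2c201d28200704040040079120101101b0c0ad110089f04058f04080d04069330101b3c501c40508102228302718101b0c102a0804cf100ae504058a14064c04064c04088201a6010141c101230102704054c0c079404075518098b08040040090c04070b024240aa004020201f1c0b9908100d1c20297030153c301d281008040b2428304014038400d0196100402c30408cb0100100193010009d70c071104081a080a0d080ae80403c70402c504074201b303016282016080040711040b490405920803090409910c070404075708070c01738702d34102788102c7410297830151c302a3c302868101001002108030044d1006910c081a08081b0409160804090809d4202040342,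
  0x1b30302048101b30301b1009582807d61c05920802c0b9b3c30404460809c8040282025845080a2040304080d14101b2c302168101504028079004030090b00c0285c30151810282c204054904044a140a8e0c0b8404060202b7460808561806020183830284c102638202404098810102664101f34101c48501530101218300404079514094904020101302320064a08064c04089d0c03450405cd1802c5040a170c05c0a100c001b54501d10101f5010170c0a040402030408160c038702661114095d04010102364500c1020282c101a0809980c064c0402c204090b01f34089728058a0803cb1009060c04040409090183c202c7c10215c8009102015280651100a210809e20405c07090404030160407cc0402c50194d208102a28200f1410111406d710030034030095014095014098a04014102078101d28101008102208081118044508071010102b584,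
  0x5c70805060408820010276c600b1410291010212406d104064a040b4c08064601e5ce0810193c701d1850408172001c201f40102018014404030060900c02378201648201d1c60409e0040b5a30504094a04091c24102354101c6860c102e5450c102d84101118050604008089c1400296101407560c06c50290c0715182040b4b1c102340302340302738500b08038701b48204064c040a1d44501334201808044d10089608068e0806c50277d40c0984040344011200a0301500d2c20100c102d58101702a4c50211020275c302068202568a04064c0406c502885f14101920202554101a0808c8080a5c040b8604050701920034704064801c14304068408102350701b30302154101b30301f0407cc0408cb040a900c0b99040b1c546040b5608098e040a4500804034100c02248202a20101a281021300b450800c08dd0402c102940302970101f6c10143c1,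
  0x1f5470257c20202c101a080a4f28102c50a081022280b4608098b0408550408cc01928502950102208034064c04074b04040040079018302274810100e18404098f140b6608075518064808081a0805c05d00c0b070808d7200592080a8a04088704048b0806420404890c058a0809972407491008d504080f04034a04018304085604080802224200c01001002424301502654300908044b1410277c100e0407090403c9040b1e04058f040b5f0809990406cc0c0b810192c501134402214102620058c1806c50406970c0a09080a8e0c091c1409870257c40c101a2440132070c102d78404058f0403006c400c02c8a10810224c40810100100267c50280c102e80102528100b140a501406910c0a531007570c0b1910204054500d2440275430182c100508064f1803405c90406020206c101e50102620100d04071004064c0407060403c30122040277c101001002268b0c102ba0101e3c3003,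
  0x99b38502610101d140aa910204094f14080d0403c704034b04081210038401b200b5408030408064c04094b04064c04070402c5040c10162c502d8c100604070b0809d804044408088c01648202d94101001002724402364302728100102710058200d0204410204410253c701420058c180a46080aa70402808820403005cf0803006d50c068a080a4504024202880601954101a0c05409204c20406cb040400400a1808080e0806cc0c02c8040b420260801c091c0808c608060400b02c7410020203c308101b0805911c10100c02c030008040040081a08034b04044d100a18080b1d48404054075b0404d0040a501408cd04095d04090902784402d4c200b201018240acd0c07c80c079a0407ca01548201b20102234202654102380b0c102d68202150600504064c04088a04040040081a0808050807110409cf040a2304050604075908101b141,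
  0xba72040409c91009880810272c302128500d1410204410204410272440151c202b94100e100aa508064c040a5104034804040040054002d98f1410122c401818304081a10079b4040408420408040801810267d6040b49080a44040b5b4c4040a120c058500d02934b10100f2030810071010280409a10409960409880405c80202c100c01c2c200c01001002b48202a28202b9410294810202850142006c501b14034095c2c302130602320074b100ae50408101803c302970a08101b34604098d1403440403005c200c02c84300f1c302070604058b04095f0407d40407cc04080102a5950810296c90810163c20181004004008cb04094102788100d14102d58101c24101318302524101e1810220808480c08dd04034a04054200064c04060c01b64100b20102370200f0c04d00402c08c60c088e0408db403040a4d14081a08079704040040068e08048801234b04074f0403c3,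
  0x2564902548902a98710101a3408571806d9040b520803c102774204034200901c2c501930101b58501930102d98101502068201c38102780102208102724202334101e4cd0c095d08080801001001c4010122009a014102020301c4c101608054b0c102b284014200a150c004094e080300949040300aa60807020408c904090b0251c202780101228202414101b44200d0257420182004004007912006890071420232c102d94201004064802274102d34100b14100c00304030040b2020133c40180407901c07cc04024608080b01001000a0030236c401034202a20404088508084f1006cc0c06c704058801b6870406c20404c502738301c2420080c100b0405070403430407c508064c040a5d6040142410270c054f0c04030406cd180b560404004008d5040a820235ce18008002208040b24100b,
  0x7490c080e08098d14034102a40301c2410163c102e0401820403008c200c02e64101a28100f0c10180808cb01c4c100060b021581029140b661010251410192806cc0c080f080a530806d40406c301844701f58202d74508070f0c014201f3440193010251c1005040655040b4e0408010150202020271c101c2420242c07db1c4040a5a1807100403430258c102454101b40102620101f34201c24200a1c1027040b530808cf0407902007060406c50408030406c504060701f50c0810246090194030213c202274201930101930100b1009500807c804089a14084c01a28304099f1809d3180a5014094f1406910c0a65080b8b04030904059208079404099c0c081a0800c10150201830280c102a281025040ae758101d0c028058f0403003000220807940405810294810152410141c3040915100553080b4e04064204088d01648200b141015443029283,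
  0x226470201810160c100b0050401c308102a28101700c0007d44820406d6100a1b0408090235410221c10020010235820192c202e34100c04095f3c20409ca04024201b30301224301b64100f0c081d080610080ae334101d3410206820143410272010050c102330075518064c04089b1409d808060b04080302140c08102c1810232010100c04cf10048804061008102b1820235c802048102620102918080d0402809610409c102b50402638200b1410190c078f0c0ae304098804074a0c074b040a4d10081e04060300a0810200406ce0c099b040ad9100a930808e27840409980c055308055208060f080b48040aa30407c202770302d2420151c20207010204010282c10286c408058a08080e080a1a0402820407ca01c20308102a20301e4c80400c06d010030088200c01024201928100d281012080718040b4c04085c0c074a080a860c028504074d040a05040748040445040684040683,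
  0x2b4020284c10182c10181408110408110405530805406c501f2850217020297c100c00c00102728100a01001001b1810170212410110c06cc0c0b0b0806cc0c0a250807d02430405cc100b480402c50288c10255410287030223410291809d804088202a80401c4030204481010254c504074b04034804064c04014304080f04048a0404004009460c06c40409d708096304074a08102978201e180a4404008099e1010102c202894a0808050802870409071020235050171007560c064c0405070400272c40223c10266c40100c0b673820402870409160808c504081a080b4e04099604080101b44401e3c101001001330400d1420252c10090408501c504060e040a4508070101d24302340101948a040b55040b4202d0803008e004040204080b0403cb0409580807d404089a04080101f1420170c100e20100d040b617c6040a9a20204040040034508070904080e040587,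
  0x282c10192c101638102a0c0a0f1004460c0b1f0405c301a34302d98201f38601f34402d24100c01100c0206820100c101e4810170805c50213c400c0406c40408820404cd0405880142030164820100100286c510100a2410284c101f3805510404c4040b56080a8d04060f1408cf1007d50807c70409c508064c04054e1c064c0407da04088204061224101c40102544102720101334101018088202e601008080b6778201001001e2c30234410275010101008dd6430213c400404024608064c0403c704020102340101424100f1c102304081a1006d20809a48c204094702784402524101001002154202970102b28204096304060e2c202030102d0402c10254c100a0406d114054e0408490406480260c0444080300aa20808c504091a0408c10247090c07c804038202a28201a08101001000f1830284010236c402638301b30301f54201b30302ba01,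
  0x2d9c20102c102a2c201d140587080a0304098e0806c50226820193010152c10160c09511009450406ca14069508095b0c01c508070d0806c502d94101310101f341021300b5f0805950405060403820171020203410244470236c40278830243030250400c0a1d48204058a08060f10070904040b04030070400c02791d08102d6c708100e246040aa60c0795040b88040a2304064102208064a0400216c50286c10170805c06cc0c03406cc0c078102574e0c10283c60111c201f10102d5c20030227c102d64101b3c201d1c202e5c504074b0403000808030403006cd1809db08058e0408c2040aa31000807910c06020181808d208084202454a0263c5028486040b5d040a111c085608081a080a0302ea0e0c102d1020184020182409df04060b0408060407c101c2c064c040803040a0a18304079c0403491008db0c0a0302540a0810212409534810040402807922001c20403090406c5,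
  0x54c0c054074a0406c304079020004050d04094a0407570c064c0407c704034101b40101e08102e8c5040ba60408c800c20102308088c1c302e1c10100405920809210407060406c10163c1010101020341019100ad50c074a0405cf08080b080b4e0805c204081a08098200d04064100c02020100a02768708101914304020610102538201f2010266911405530808060409911c06020405920801c5040a880406420401c508088d0246511c05c80c0784040814040a0b04080e08048b040a9518302e64100301340100c02978200c02644302c8010180c100092358404091808088504094200f0c089f04084202274202a48201d20100e0407d610054c04078a0810253820184470102810272810122007470c2040a4d100a5b100202040a4608064c0408cd0c064c0402c80406c504058b24204099808102ca140c102a48102020201d2020153c101e0c102d2010100c06500c081e04088a0c0649,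
  0x1d5830151820133810150171c06ce1005c702474b1405ce10102114102eb1c0408010020133420273c10257860408181c074d0c068e0806d904002738500902340302340302384804064c04088a04048810079c04064a04060101955308102130601e5ce0810266040408d21405c80c06570408010204060291010272430270408080c09e004095208059208069730202528101b14101f4010141810152c202278102524100c01d0c030085b140b990409e30407cc0408920800c09d03030402c202794508102350702260a08102d0806cc0c034084408084102844602270402d14202208050f040b4d040a5c04089004060304030034100c0133c402d48202248201c40102d58101a2810122010100c102068202b94102a38100f0c0812040b070409460c101e6c102570202c1c102844400a0242c502960402970101904058f0c078804014304088702c90301930100d0c100d040a4508068a040b288820409de181,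
  0x2664101502928408102238d18102824201d34101530101d5cc14034b0403c702638202e9810284c10180807133c20405cd18094b04020102481b0810262010215c60285c302860202d8c101e54501010101d2040193010193010152c10206820272010227050407940406850122c2040a1a0c09d51806cc0c06cc0c088202130601648201f58702844600f28508101518101d0c090b01128501f30038402a40a04085a0406c30280403008952007cc0409172406d8080b660809d7080a8a08002a9d404074a1009c5080acb0407090407910809e20407522c401d28100e04085a44501114200a04081d0803006d71003008d41c06d00809501409501402891c204074e1c06911020406820278810282c102044600c10202884201f50101d1010171c09d01009580c0b5a0810080c10287050c1018447025241013200857200a9e0c0b1f04048201930100b081019301015040ad208058a0806d9040b41,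
  0xadb346040184040811040811040aa70402809d90c101630602728101010102724402a50301b64102910101f28100804060e040583040b4e0802c101001002385404080a0403c0300349040300a1b0404880405cd0c068a08060302044102044100c102022081022681022080a6340502068502608096104080d0407870806cd0110c01c61010276010100100202c201920301930101d28401930102a4c302e8010162c500d2c10142c50252c101d4c100a0805c40809950406c80403410215c40810275820080805c90c02c80409e1100b530807110407cd040a040406010221408cd04094501f50c0810276c908102380b0c10244c204040040079b08064c040547080a5b040a2308091c08091120204034704008001b30300b20102860202038202864301c4410152c300c24101134402860201720302068202440101340100d2020407cd040a1d1c00c0ad4100987010010002001,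
  0x1b4040203c101d24402b9410215810262010060c101c3005d00c08870408d720059208058a080acd04058200102458202140202958a1410250803cb10058f04081a08070904040040024200c0265430233c10242430173c102e68f0810130200402c07cf0c0995040a5404010101f1c0b990810257c200f0c080d04020201d54600814201b4020050805d00c0710040a2508081a08040040064c0400196100406550408cb02a0808cc1803491009a1482040b5d04064f180246080a501406910c0b9b3c102774301b0c08991c0a5310040040048810050702340401e3c30268c202ba010194030180810206c102128064c0403c804064c04088201a5c302b6c101630602784302564a0010174070174070181c04040408c80256020221410262c20270404004007100c100702a2810252810280c101718074300e10101d0c07560c030060400c,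
  0x162440810100c10241c030101e2420131806cc0c00406c40403c300d0c0855040a44040a60180a5d0801c308102174302738302b48201b1410220808d00c08d00c0b660805c400510100c00c00b00c10201d2c101f38101a0809e22830152820191007d7080b980407450407ce02018302c54102370501c0409d808068a0808440802890407510c0a8d0406501003c30251c058a0808cb04098e04064c04064c04034102650100a1c102680101910055118202664102524102374101f5010241810172c0b6b38102a4030180802870400409d11400221c202c7c10172840261c10280c064c0402820404d00403c70403c300501d349080bab6030409a214102ea5238102918200f14100a0807d61c098e0c088d0403406cc0c0b4b0404890c0b41024447021506015281018080a5c040b0f04079818102470302d84100c00d0403008db0c081704074100a,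
  0xad53c204075b040ac50407cc02b4c301228202724302e64101b30302918300a1410191c0b9508102e588040954240a170c080b0407131406470c075508054089d08020101f3860224820215c10270c064802a0803002440808c604081a08048a0403cd08054c0406c40400403c70231400c0a2130501f1c102510020100f2c1008040a170c02c8080a8d04070b02e4ce10100808101d44201a0809215c101930101d0c07ca01f6950c102270c04080d20102018101d0c074404008050604002079c0c101d5c308102c1c1029180896080a9204068e0807430253480409c804038101f3808100810193010254050254050223c1005080b4e1c30409df0409a21410212410293c30192810102c10060403c60c02060409c304084902a3c10200c101d0405c050f1c404098f0c07ca0c101c38301e2c200d24202b6940409971c094d04030040300c01f0804d0040806,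
  0x2718100b0226810180804cf10080804060b0402820227c101c18102c6440810200c04c60163c102034102c9c308101d5460153030150193c701220401001001638101930101930102424070a1408190c05070408c20261010142010111c058c1807590c0a210805950403cb1008dd0405c91009880151c202664102910101b08099d1c05cf08098f0c089b0809646c504099c2c30404004006910c0300b4100c02b6912c102168402c84b0c101340e040757080a5b040a2308080802788102c74101738701c38302038201908101818301628201648200c24102c50101c4410206c101e10101a44301e54202c2840407480800c102a3c300300f1c302108044f0403004004007c80c074a04038100b0152c100a14101c3030250407921c20276880810222803470809cb04050604068202068200102c7c201c44102654202728102ba010080810256d50c07470c204095d0c10271c3019301010010,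
  0x6480c0b520809620808d00404860c0a540405c504030100f24402b542016541018240a140c080d040a0b0803c301530302a2c20191420407590c05470806c8040b61040a03040a5208064c0404004009cb142040695080a8e0c02c202a8010020143c508102e04091c0802c608060400d01508054201102038202a20101b30302a28102996310100302d58202458202274101c24100f2c402860200c00201001001a4c90c070100d01630601e70102124100a01740701740701e4480270407430160802c044d1006cb04098f1405c09450c20408d90c0400400a20180b1404058100301a2820227c102118101c040710040300a0304030020300c10201e70102d18202048400e100b16442040a860c044a140a2308099d38302c78101d140592080a0d08040040079108080f040a4408088c02934c0c10294c6021181019180a5f04064c0406c8040704,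
  0x70b0297c10193010277c102118101644f040a531809a05c2040a4408080f0407450100100164820283420262006c508101e4880112850288c202a1830222809ca14204099004014200c10201e70101c2420270c0a0304030090900c0267030211810227c1015080b570800c0b140408cc01001002364301a08098f1405c06cb0409830227c100b00f0c034071644301740701740702124100a01630601e7010287c500d01d0c10180804004003000803cb100a180807090404c602d58202458200d0400c06cc0c0a8a040a88040a030286c10110206060174840220802c6080a4502b207040aa004008099418101a5420242c040040064c0406c802d8410280c101b2010262006051020407590c0a8b0806090215cf040a140c080d040ba80405950403c9100ad5080a0b0405c50404860c0a540409620808d0040b52080849,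
  0x10010019301011200b1c1c3029606019180ae80402020409ca04088c02c7c201c4410206820010164820141810272c101d140813443040a5014054502c90a0c101c3030152c100a14102970300b01f20301d281010010015040300a5e0c03c70c080800302458201d20202a8040409530406910c079508078404090902c50101c44102d0806060c058a08080e0806420405ce1c070e0c0b1d0409420264430288c20296c1008040917244040b212c30402c50c10216840050c100c00c00040040099c2c30403070810263c30226c20173c201018090902664101b1408d01008dd04098202884201654101d64300b08034a04050804098404089a04050704070a1408190c055208064c04064c0408c50100100193c701220401530301501d5460100c058f04080d0408d82c100d2c10266ce1407060407c202b7420182c102020100c04071014204089a04040100b,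
  0x8d41c04d00406ce04090604060c04030094d040300a257050409971c034908060501d64f08098f0c060201c2410170200c10170806511009c30402060409880153020102c10293c30192810123480810212410277c102004089420088f04080404094102a9990c101930101930100d24102b94202720102b341017100a2528202258202a48101330402c1c101d5c308101808050b1405060405cb00201b58502018101e4c502004079b4040407da543040ba910102e38102458708064c04084d01c40301d4420254c50402020406c8080a8d0402c808088201a44500f2c10235c201d14102374401f1c10226c70407990c08dd1000c05c800a01b10100100f34201530101c1008c60402c10180c100c00e08030034910085704089208088a02270402274201d54201501c4c50191c30202c1018280898143040954240a5d0409c102618100a14101b30302918300c040ad30c048a0809ca040ac504075b04090b,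
  0x1534100a0205c102304070d02d84100c02161008102470302c3c10192002c102150601a1c06cc0c04890c0b4b04060502234100d02638301808081a0803c50409d840102918202558f14102ead80c10204060409151008850401403c70408c101930100a08100f1c10080405ca100987040887080b1f04059318300a1c10010227850406172410256c302638202418101f5010009990409490407130c101e20102a70d08102680102650100a1c10268010193010263810193010162820232c102340302340301844701940402a34100d0c084408028904068a0807ce0295090808060c0b1504088202e60101f0807ce14054a080b6054102450902634501f38100c10201d2c100c00b019280300954240b660808d00c08d00c09e274102b48200d1408c50298060297420180c050e0c074f0805c90406c404054100102948501e24202588101a0805ce10040304078810102b401,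
  0x58f0403007560c030095f1030403840403450c10161c200a1420280c10252810171c07571c30100100113440262c202560202214102664101010101b30302b34101740701740700100088201a5c302b6c102650301930100f2010120c09c30180810150806c302340401e3c30235cb0122040100100226470294c4023202015040b164420409dd0c06910c0b410193c600918202d74100d0408cc1803491004c508060b0405cd1c3020040540b6208064c040400400a2508081a0805d00c071004098f1406d00802050808cc01d5430213c6040792040b995810202c102608064a140a540409950409c30262c100b00d2820404c09090c05cf0408cf04048201e64400c01001002068201c24100f2c40163c102238d18102958a14102458202140201908100102b34101f0408d720059208088704068200e2010060c102158102620101d24402b94101b4040203c1,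
  0x30001c20308102b50402874700302c75210101f3410134010171805c80c081a08044d100a1808054b0c030904071104094100f0c02c804068900d00200d1c1027040a2308091c080547080a5b04079b08064c0404004008d62440276c90810100c0a230408cd040b0d24102a98302068202810101f3410172806c301724300b20102940502758201e14201f080b4b0406c8040995040a4301f20301d4c10252c101508058b14034b040a930c0ba004074a10064c0406480c064c04080b0804004009141c20409d8040a8d2c10161420103c604080d04040301e48802068501f184040b540804cf10089a04030408088204081104081104054201701b1404880406c500d24100c00f00c005040400400a20180b4e08060e0405830406cc0c07ca0406d9040a440405c60272810101010234080810163060260402808110408110401840402c4,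
  0x7460c06d9040ad208058a08078e04064c0402c204034102894202c7c10215c802a78300f2c4025241018447022080ae53020402030409580c040301c18101d10101f5010100c0811180304080a0b04034402c6c70c101a44408101858204074e1c09501409501408d41c06d00806d71003006c200c01840301114202458404064c08054f14074a040ba608101734301e44202788102b2c101c24101d28402714201944401a34089d080a8a0809d70801810245c901b60201f3010200407170803003040803007d540304085a040a0300a02a38a0808c80800c10194c301518100714101614054201648201a0c08d21406cc0c09d51806cc0c09df24302ea0f0c101c60604060402720101804064c04054b04064c04040601e54501010102d8c100e100857180a170c09880406020227430252c1017346008080a98140a1304098e080ba6040b1e5c204034b040b2718102660301d341015301017347040a09080b69842026641015,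
  0x9a03c601a28101f3c064c04034304064c04094300c0c10050c101e20100b040990200a5c040a581004c5022080b070409c402cadf0c101e6c102048102c1c102a4c502a38102068202b941023300b5604068a040892080710040b520806c500d1c100c01c2c030064802d34102e040a56100b4508089c10060701120058800d0252c60c102260a0810294030408d41c0b1c5460409d030304034100302234085b140b9904014404030094904030054b08089e04050604060101608081918094a02548201648202780100a0409db1809c90c0810180a440405c70806570408d21405c80c05080256820408d208064a04079c0401c10193010222810193010202c08d00c08d00c034200902258201b64101d34301a38202dae30409cf0407c702c5410020274c60260807921c10153820408dd1009e35c60406ce100b120c09c400054608060c,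
  0x277030222830194030207810251c202d2010153c101e0c102020201d20202a48101d0c0b5c58404058b2420406c504038102334301930101930101504084c016242040a4d1009950809ca0406111c040a040b6534201530101804081244304074804089d080a920808d208089f0406c8040a05040b4c04088504091808064702d4c20180c102c80100a040a5e0803004d0040300b990400c09cc10102d6c20203820122c10282c10141c05c80c0784040a9908100a1c101d24300714202a2010190810164820071410264470180810154c202018100d28102020094e0807c80409cb04064102e04050800a0080c100c0170803007d344204081a080b4e0805c20405cf08080b08074a04060701e44202034101010102704095b08070604092104040101f3c102e1c1023841025040b6890204030804095d04088702470c0c102e98101e08102214064c0407c70407570c064c04050d04094a0401c100101d28101b0c1015303015,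
  0x1e60408100c24100708102804044d04028048a20101738602c70b08038400100d2440236c302660204079c04064c04080304064c0400227430201810277c10182c101e44201840202d10200b14064e10081a08085608020202154908091528098f1409090c08d2080a8804058202a70501e4430202c008058e0408c20406cd1809db0808030403003000809944c204074b0407470801810227c102d64102d5c20030250c0a932810283c60215c401b30301b30300d02a2410170216c50286c100b18201928100a0810160c07cd080a23040795040b8804069324302d6c708101a1030407480803000c100c0183c401c24101628202608080e0800c09e20c090c0c09111c08db10080d0409c102454101418102d7c20165410251c201f34102d94101310102858e0c101c3420256c300714201b28501a54202514101710064c04054b04064c0403410237040263820280c102228054c0c0a8b08040b04074b,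
  0x1b30302ba0101b30301f5420236c402638300f18302840101001001a08100a08058e0407c80402850805cb02334302314101d0404440803001c100c02b6940406d114054e04071644301528102d08064908080c04080408080302834b080a5c040a0301001002524100f0c08965040409a48c20406d208050802d7c200f1c101424101920064c0403c704064c04090b0292050809644c2040655081023402027501023441019040400400ae00c102214102038202e6010162c101f3809160804cd0409510409c80408ce1c30407da04088204054e1c064c04064c04094101f54201f1c10183c50233c40223004c404001b6020284c102b90d04028904040040059208094101b30301334102208101f30091f10084f1009c8040905040aa930604079204081a0804030400150807ce1807cd100b660805c40277c302c7c1011183016040a6794c04058e04064b0400c1,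
  0x2e9c102038101c24101d040400400a9a20204078e28102a98200e2010170c10232007cd08089a0407d404038201f0808e00404020403440403005c200c02e9550407490c08d0040b50080a4508060e0407860203820252c101330400d14201001001b44401e3c101b44402658102068202d38102458202314101c6cd0402870407973870223c101a0807ce01d5830193010253480408cd0c038102014200a1c101a34204089c1408df4c202910100202024302978200d2860400c09d70809630406c404040601001001228102120064c04014304074b04034804099a3070408112040407100c04c602c88f0402020403c100804095504020102150802d20102e5880405cc1006cc0c0a25080b0b080b4202948502124100c0405c0400400a8200a00c0010297c100c01f28502170202840101a0c090b0204410204410215410182c102b4020284c1,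
  0x2758301a10101d20101114101d34102814100a1410181c085c0c074a080718040b4c04091908034a04064a0400c101f58100c01b40400c02471908100302a203012080a2018028204080e080a1a0409dd3870204010282c10151c202070102d24201a080785080aa304060f080b48040603026603019200ad9100a9308099b04001930100a08102824201930102934402078101d28301d2c1022140ae304094501530100b14102b50402638201f5500c102584102034100a02484102620102048101f1c0a9d4830122010220808440808c8040b0604060201d3430182c10226c502760201d5460193010193010242409c804014304081a08050d04068d14102074201840202788101b6410122430080402840c20409ca0405c408101c10102518302e3410235820192c20020010221c10007c5080a1b0407de10101b58400200101700c0288cb0c09990407d50405830402c08060402c1,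
  0x1544302928301648200b14101b30301908102d3810191c0bab40102948101524101a5c301e501012080140b4201e040300a920c028096304068901928502a2810280c100604068304054099c0c081a08059208079404030904048801a4430299420294050253c50267c60274c6024795040b1c0c092218101f2010251006030193010220806500c084f08091824070101e3c301b1410200c100e0807902007060408cf04050702034100a1c101f34201c24201b4010262010245410100c0a5d080710040a5a18001330a08101c2420271c1020040951100540b4e0406050193010251c101930102130058910204098b0c102b94301844701f58201528202a0c0a530806d404080b02a48202514102a4c2040ad40c094a0c085604060304030101b40401c4c101a38200102e4c100f0c102e64101a28100e28100c00c000a1d48204058f04070904064901a5c904080e080942,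
  0x2e7c608100b02334102320102970100201f2060408cc1805ce1c08d50404004006cd180b560404030402c201538201424102064508100f0c07c508064c0403430404060232009ce0c0709080b270406c20409d804001d0c06cc0c074302794508102214201034201708001001001918300918201e40701f30101e3c9040a560c020301e4c200c00b14100c02274102d3410287010182c10174070174070232c1022080b143c301001001720302574202004034048a0809050409e004064401d1c202324101c08100a0809490403003000285430010227810232c058f38304075108095f0408080c0713040a4a10102240502d98101c40101001001930602574201934304080e0801420220810171c081a08070e04090901501b58501930101930100d0407560c02405ca18204078810102264f1c06d904058202d4ce040952240b42,
  0xb6604074f04078d1810203820235d60c101a38201001002068201e5c1024686040a4d1408c60c088e04020300b0272c402370200b20101420074f08064c0408910c064c040a9e0c034a0408480c08dd040ad9100786040949040a4302d58101c24100d1410270c05920808cb0404004009d708058f080a5b24204092008102118201f30101f5010280c06cd14102c84300f1c302208100c0182403008973860143c508101d70d040a5b180810180ae50403810276c6021306018247040b48040b470803406cc0c08820236050c1020285029481014240ad2080a8a08040040070b08030074500c00e100996040a0102044102044100f20308102e8c30407110c0340a120c07c702d2420291010103450c101d343040546080804080842040b420243470810206840122c401a0803c9100540400400a5104034804064c0406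c401c34502b9410151c20270c081104081104084a1403450409e12870409cb0c09c9100201,
  0x236050c101b1410141810182407110409cf0408050809880100100222810080c089c48502d68200d04088d0809950406c80408490142c501e68102b34301f2030142c200b20102784402d4c202868a040a501408cd04075b0404d004094501501134402860200d2c100b140400400300080a1d1c02c050604060201c6c8040b1d04008088202318201f3007110401c03090404c50406cc0c02c804080e0808c801001001b2c101a0805830405406550409410286c102914101a28202d0805cf0803003c300c02a9c100a01630602918202b54e040811040811040a4404034090900b027281001023643025280400400592080b65040b941c20404440809d804074502a4c302d8c102e9c804058b1405070193010252c102d50200c1020276c1018280b298c204081210034b04080d0403c704094f14088a0262006c818101e488,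
  0x1e3c300302ba010202c04004004881009df0403c804070604064c0408490194030262010206c101e501026852081017241020240340a1204060b0409d50c064c02674e0c07570c01c202940501a44301d4cb040707080ba004094a040a030404060100100224c408102550904074b0403003000287190c10132070c10162c504068910095928091c140a8e0c06970c0a090806c50408c20102c40113440260803c302664100f0c0b1e04058f0403c90403c30245820277c10251420405cd14054c1009950c0a0301501001000d040300a0b0808560401830407040235410203c101d24400d0804890c058a08048b080642040a8a04088704054201740302c1c202068201701d54601920202d98202230055110101844600604040040074b0403c702654100d01928502950102e68f08102154102d1820262c102b8070c102c50a0810203410200c089c14080b04095f080745,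
  0x7db04050f040a5c04060a02270402374102d1420030133c401a28102a20102228060304030038200c02248202638102d58200d04064c01f3010232c102670301b30301b30302154102794508102350702830100908058f0c034704054d04030304090b140b86040a5c04088202914202554102940404064808091f58201930102524070402110201a080b560405c034b080403040b0704054024100a02c1c102610101b54504079b040a0d28201134402258201648201334201c401005040b9c44504064c040a4608064c0408942009ce14088b08038401e5d408101c54608102650404040a04058c1807560c04ce0405c70274c60227050240400808dd100b61040b9514304060202714204094a04060202798e1c10278010164820181409180403001440403009542407d004054b080a8a0406554c204081720064f1c05c701220402d30201b44101928102358202910100b1410262005c80c00405060400c1,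
  0x1d2c08111804450808993c501d2810132008d41c098a04095014095014034030028100c0275c200f14102b345040a8a08085e0807cc04079508068202d58101c2410220405c060302714200d1410215c800910202c7c100e1c06111c04040409060c07430225ca01628202540502540501930100b0810266030193010278810282c102364500c10201d3870257410279080408cf0c08820080c100708085444201b54501d1010206cb140a170c05c05cd1802c504089d0c034504064a08064c04064c0408460286020130252410192c088e3460404860c071214054c0409990407cd0408d928101f5c502c5030263820284c1000b1314102d7c60409df04058202a38301614050718204054604020101424079004030080404028085a04064b02b6160c10288100c101b2820409c70c081a0809c80401c308101118201648200b01f5870180809d51806cc0c0812040605,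
  0x68e2860409d420204091608040908081a08081b04044d1006910c0784040300400400a8f0c0a1a0405470c048202788102c74101738702d34102738301d5c202644301c10101648200c24102d24101a08064204004058a08064702728100b14100f1c102504081a080a0d0809d70c071104089508064c0404004009a07010070400c0285040340a5d28100501f20301d2810153c3021300b995810271c10260807880c088d08101320201220402430101001001b0c054c0c079404084c0141c102d080a9e04064c04064c040a030133c402b94102b7420182c102718101b0c10222830242c0b120c20406cf14080d04028102b4440227c100b20201c0c081c1810100100173c201d28202a2c2020040ada44b04089d0808dd14101f58200a18100c01b58500c0220806530c05950408110408110405c00151c202664102568202910100f2c400a101017244018342,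
  0x2880602a98102d5c20266010171004004003470403003000c074302118101d0c05d01c05d01c0b150808c402884f08101630602a0802801c10263c502018101b3030242430227c10190c102ea5f08102574504075608059208094904040040064c040b0604064c0406c8040a5318098d08089b0808460405d01c05d01c0b4200100d24401724100c10202b94101e4880257c102344d04079c0409d94060274040162005470806c8040a030402c10153030254410214c504094a1008562c401d6830810202c0b9c04064c04040040081e040a54040a0b040b4201b3840192030050c101f28058f08080d0405530401c201b0c089c04059504089d0407090403cb100a18080a658c40409550408c50401c10103890810217410287c50150003000247020282c201944301f28100b0020173060212809090287810161c081818099e0c0a1b0408cc,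
  0x89b140b1f04098704020202970100a1c10152430180806501004d004088504038402670301930102c10101018055124202664100301c3c300a1c1023404040a21080b5f68304098d080a6134101838301848501f5010286c202638202b6c102c3c101a08101a1c0a8e2820231410170809d718304081704050800a01d0c100c00c10200c01810081a08060102471518089b1c204079810102548701b30301b30301224302d08038804058102738300e20102e54f04099c040a180c0a5d08091114100c08100510100c00a0403008d00c08d00c0954240b8e040962040b9604094b0c094202b4010292c10100c101918074f080b06040a4404058b01b30302978202b34101b10102870302a341018447022080a0d08068a08054f0c028904095714064c04014304068202b5810190c101628202870102eb0d30102564a1010070c20407ce1409cf0c03040807ce04034101d5c302c5410282420202c08571020407cf04080b,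
  0x91420102720100904089608064304095b14068e08095014095014094200f0215c90193010193010100c0010101018300691102040b4b0407d61003c402b912040a0a14102c1c101d1010020142c502608048d08034908075514064a01608080604098301544201b3810134010180406d710030038708030048b08064a04040b040a4301420099608102a1830200c101a08102548701c24102570400f18301944402020101d54202374100e2010181c020101b40401b080a0304030050700c02248202d1020261c201d0c038301d24302e6410224c60c102b54f0810242c05409e54c4040ad43c204070d08102550900f1c058800b0264080285c302a3410221408d70805c408038404020201730201930101930101b340a902810215c10271c094101f34101b1010282c402318102330602068202948a08101e64302374402b74102208070d0803c4,
  0x2540a08102d2c10232020110c085b0807c8040a1204028202e2c100c24102670100e080a50140a5e0808dd04060601a5c20200c101e3c300302d4c20277c100808054064c04094b04064c0407060407d4302040a1b08084f0804c50258c1029481020685019040b640405860406970c080802c4c201648202928301a6010154c202d38101b3030190810238020280c101e5830181c071014204081a08080b0406830401430403000c100c01b08050800a02b5420180c10215810192809db10068e0807130407c101b3030252c10294c201b5010292c608102b50302a48202a28102c50301c24102a64204058f0407911c080e0809df04038102e64100102a6c2040b930406cc0403004040403007db1c404095d2820407cd04088202020200814201a28100d0c09550807cd08080d040287040612140915040a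d20806d004095534201c3c301804098f140b660806111c07860409c302e9c804095110048e0c064c04064c040703,
  0x2389e10102570201b3430154c202b3430266c102b64402584102d24202b4c10151c202810101128502d2010050c101e18078f0c099604054f0808c501c2c402638201530102228095504064c04064c04088201d28302d682028242005040947080b4c04085c0c06ca0808c608064a04034a04068501d20100102758301d24301b30300a14102814100b0203820150215490288060172030282c101628202608079404030080100c0213040403c80c20406d70810192c202918202518302e3410143810221c10100c00804890c048b08018404058202d8490809cd0c09ca0406cd01f4060403c90408991c06550405830405407d4482040244080a1b04080302e10100c00c0020133c401b2c300a182040b540808d010100e1005c080d040280a8f24100f1c10173040810235c802484102120050d0403840409c804038102978201840201418101318089b1405860c064f1c060b0405c708064c04064c040,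
  0xa5b24204089014081a0809d7080b200c07d40407cc04074b0406cc0c09e2040709040a45010010016482023300a5c2820408d904094101d2c402210100d241022080b210c0a8804058b04014100024200c0236d00c10275c301e5c10220810245820134010253c502318302038201858102d98100e1c0400400b4610101a38202120302e58102680304034a04088c00b102000b470802c804060f1409cb1008910c064c0403840408c802728508102e401009040400400b6504090900f345080a440408c80277c102108102010202704084a1409430408110408110407512020289c908102d6420405ce18064c0403480403410151c202524101c181008040b61040a5204074a0809010100100195c100a0809df140b480409db1808820408d21406cc0c0b47080812040ad538100710101508074718101c4430253410202c100c0111803009a10405cb040aa2080881,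
  0x400400a8200a02544501f3010193000406cc0c0a0d080b230805420236c402830101a38904034504070c0c060b04089d0407db04034102344100b040a560c070908099c04058100d00c02470200c01001001e346028040855040403040b5604040601e4420232010185c90405409dd5810297010020192002030406c10207910806c204040102a80e0810242c608101424100b14064c0405070407c508064c0408050809e0040a5538102724202ea0102d9810296c402068201001000a18302d98102b5840203820245030257420215c601334102d506040506040a1d44501a2440290c038701b5850193010207cf0407560c068202780101724102414100e080a11180aa608071a040a0301001001f4050810236820406cc0c06d1080996040b8101d44201540202660101e1807100c10216c501c4c10203c200c0030403001c2028543020481,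
  0x1700201c3830009db08050e040b640408c20407cc28304098f1406850c101c38301b3030190c102424300e0c0b5708034089f04058302b944040b490400c00803000406cf0807470809e214202d4c102b54200910202368200d040a9b48500d24402208079c0401c20403090407c702470908102740401528400a017304040610080805080a111c05c408081a080949040ae804064c0408030403c302a8010182c10227430183c20081810131010251c20006030152c300804055304080d0408db1009d80809500805950409150406820267010280c102638202174101314068b08074d02544401b14102364501b28501930100a08101930101d0c10281c1024081019281017080285080795040a230406040406cc0c0a1e040b450409410286c101b5c102b50302a2410278910407d60807090409e20c0ae504080e0805cf040b5b1c20405409960404820102c100c02d34100c,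
  0x918080b4d0408850405c08da0c09910c060304064c0245c402a48202a7850407480406c8040a0504040302764304048b04034202828408100a1c10172030210404d004030030002d6c201738202e64102c10102ca140c10251410101010153c300b20101a4460006500c09c704094e08080b00d14101e0c102154102d20101844700f1c102728102118040e24204054c040a110c10233860245c60193010193010270c0a4d1000c0b5904060502750e080b870403440142c502a80101128204055104044d08058f04099624080d040592080921040a8804048801e40801d5c30252810271c054c0c095f04074304038202724201b4010273c30170c060301930102208089004034a0400c101301b5520807880c07c804090c04064204094d0407c102644701e2010164820207010170810030206820152c102a2c201d2810173c2019180a0404028094e0805870150805c500c,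
  0x2068202d38100f0c00c0801024582020040345080306040b8e0c10203820275c301e3c10100100296d610084d04054202789f0406430405820223c100f0223870810101030407560c064c04050704090b00b20201f1420122c2020040a860c07d40407cd08010100d14201c2410090402c0adf60401001001d5450234010275c90408d31408501c50404ca100a4508054d0408e00405c080b0408cb0245c800c00c00070e0406c6040a5214089204001001001f4090c101230102d2010030406c501b30300f0c08110408110405530808820284c102c18102aa010182c102470200c0280c100c02b4890c07ca1406c802518301b1010275c2023080ad208080f040400400a44040080a9308102b94102268508100d02024302c181020441020441027601000a0302170202234101d1c200d201019301010180aa010038804081d642040909,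
  0x9e11000c04004007db28204081a1008d210068202010201d3c1019242015080855080a5c04090d1c2040a5f2410287100c10245480213c401920078b0c05490c09d40406cf0408d0040509040b5f08084c02584101930101930102d040a8a0808060404004008d81430407530c07c804070d01f54200b02ba01022080a860c03c60c04440c10236c401538100b02514101f1c0a2308054a0408e17830408d714100e1006900c034301d28100c01d1403009c804090504084f1008c80102c20100c102a8d10810272850409132004004005c80c06c40405520809c301128501118302c7c10222c08cf1c10224cc0c102588204070b08030060900c0101840407cd10054c100aa40409c80404c500d01f68101b1410103020409cf0c0b923c30408850404004008cd04058b04092008102038202e70101310102a34100d0c054f0c02890409e1040a1304064c04094704064c040b4b0408cf10070b080643040508]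

theorem go157 : go leaf24 ((List.range' 1 6).map (bm 24 12 729135)) 729135 hints157 = some [] := by decide +kernel
theorem go327 : go leaf24 ((List.range' 1 6).map (bm 24 12 1368073)) 1368073 hints327 = some [] := by decide +kernel
theorem go48 : go (leaf48 ((List.range' 7 6).map (bm 48 24 1553536655529))) ((List.range' 1 6).map (bm 48 24 1553536655529)) 1553536655529 hints48 = some [] := by
  decide +kernel

end num2
end NB

namespace NB
set_option linter.unusedSectionVars false

def ev {n : ℕ} (a : E n) (i : ZMod n) : ZMod 2 := a i
theorem E_dec {n : ℕ} [NeZero n] {a b : E n} (h : ∀ i, ev a i = ev b i) : a = b := E_ext h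

theorem Rch_append {n : ℕ} (As Bs : List ℕ) (y x : E n) (h : Rch (As ++ Bs) y x) :
    ∃ z, Rch As y z ∧ Rch Bs z x := by
  induction As generalizing y with
  | nil => exact ⟨y, rfl, h⟩
  | cons A As ih =>
    rcases h with h | h
    · obtain ⟨z, h1, h2⟩ := ih _ h
      exact ⟨z, Or.inl h1, h2⟩
    · obtain ⟨z, h1, h2⟩ := ih _ h
      exact ⟨z, Or.inr h1, h2⟩

theorem Rch_dec {n : ℕ} [NeZero n] (As : List ℕ) (m : ℕ) (x : E n) (h : Rch As (dec n m) x) : ∃ m', x = dec n m' := by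
  induction As generalizing m with
  | nil => exact ⟨m, h⟩
  | cons A As ih =>
    rcases h with h | h
    · exact ih _ h
    · rw [← dec_xor] at h; exact ih _ h

theorem go48_spec (x : E 48) (hx : Rch ((List.range' 1 12).map (bm 48 24 1553536655529)) (dec 48 1553536655529) x) : ¬ Hyp 1 x := by
  have e : (List.range' 1 12).map (bm 48 24 1553536655529) = (List.range' 1 6).map (bm 48 24 1553536655529) ++ (List.range' 7 6).map (bm 48 24 1553536655529) := by
    rw [← List.map_append]; rfl
  rw [e] at hx
  obtain ⟨z, h1, h2⟩ := Rch_append _ _ _ _ hx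
  exact go_spec _ (fun z => ∀ x : E 48, Rch ((List.range' 7 6).map (bm 48 24 1553536655529)) z x → ¬ Hyp 1 x)
    (fun r h h' => leaf48_spec _ r h h') _ _ _ _ go48 z h1 x h2

abbrev f24 : E 48 → E 24 := fo (show 24 ∣ 48 by norm_num)
abbrev f12 : E 24 → E 12 := fo (show 12 ∣ 24 by norm_num)

theorem hio48 : (io (show 24 ∣ 48 by norm_num) 1 : E 48) = 1 + X ((24 : ℕ) : ZMod 48) :=
  E_dec (by decide +kernel)
theorem hio24 : (io (show 12 ∣ 24 by norm_num) 1 : E 24) = 1 + X ((12 : ℕ) : ZMod 24) :=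
  E_dec (by decide +kernel)
theorem lift48 (r : E 48) (hr : r * st r = 1) (hf : f24 r = dec 24 84255) :
    Rch ((List.range' 1 12).map (bm 48 24 1553536655529)) (dec 48 1553536655529) r ∨
    Rch ((List.range' 1 12).map (bm 48 24 1553536655529)) (dec 48 1553536655529) (X (24 : ℕ) * r) := by
  refine lift_Rch (show 24 ∣ 48 by norm_num) hio48 (by decide) (by decide) 12 (by decide +kernel) (by decide +kernel)
    (by decide +kernel) (E_dec (by decide +kernel)) r _ hr ((unitb_iff 8 _ rfl).mp (by decide +kernel)) ?_
  rw [show fo _ r = dec 24 84255 from hf]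
  exact E_dec (by decide +kernel)

theorem lift24 (m t : ℕ) (hm : unitb 24 4 m = true) (ht : dec 12 t = f12 (dec 24 m)) (r : E 24) (hr : r * st r = 1) (hf : f12 r = dec 12 t) :
    Rch ((List.range' 1 6).map (bm 24 12 m)) (dec 24 m) r ∨
    Rch ((List.range' 1 6).map (bm 24 12 m)) (dec 24 m) (X (12 : ℕ) * r) := by
  refine lift_Rch (show 12 ∣ 24 by norm_num) hio24 (by decide) (by decide) 6 (by decide +kernel) (by decide +kernel)
    (by decide +kernel) (E_dec (by decide +kernel)) r _ hr ((unitb_iff 4 _ rfl).mp hm) ?_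
  rw [show fo _ r = dec 12 t from hf, ht]

theorem wtf24 (r : E 48) (hr : r * st r = 1) : wt (f24 r) % 4 = 1 :=
  wt_fo_mod _ hio48 (by decide +kernel) (by decide) (by decide) (by norm_num) r hr
theorem wtf12 (r : E 24) (hr : r * st r = 1) : wt (f12 r) % 4 = 1 :=
  wt_fo_mod _ hio24 (by decide +kernel) (by decide) (by decide) (by norm_num) r hr

theorem Red_lift {n h c : ℕ} [NeZero n] [NeZero h] (hd : h ∣ n) (r : E n) (H : Hyp c r) (t : E h) (hR : Red (fo hd r) t) :
    ∃ r' : E n, Hyp c r' ∧ fo hd r' = t := by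
  obtain ⟨k, u, hu, e⟩ := hR
  obtain ⟨k', rfl⟩ := ZMod.ringHom_surjective (ZMod.castHom hd (ZMod h)) k
  obtain ⟨u', hu'⟩ := ZMod.unitsMap_surjective hd (⟨u, u, hu, hu⟩ : (ZMod h)ˣ)
  have e1 : (ZMod.castHom hd (ZMod h)) (u' : ZMod n) = u := congrArg Units.val hu'
  refine ⟨mu (u' : ZMod n) (X k' * r), Hyp_mu (Hyp_X H k') (Units.mul_inv u'), ?_⟩
  rw [fo_mu hd (Units.mul_inv u'), fo_mul, fo_X, e1, e]

theorem Red_X {n : ℕ} [NeZero n] (k : ZMod n) (r t : E n) (h : Red (X k * r) t) : Red r t := by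
  obtain ⟨l, u, hu, e⟩ := h
  exact ⟨l + k, u, hu, by rw [← X_add, mul_assoc, e]⟩

theorem Hyp24 (r : E 48) (H : Hyp 1 r) : Hyp 2 (f24 r) := by
  have := Hyp_fo (show 24 ∣ 48 by norm_num) (by norm_num) H
  rwa [one_mul] at this
theorem Hyp12 (r : E 24) (H : Hyp 2 r) : Hyp 4 (f12 r) := by
  have := Hyp_fo (show 12 ∣ 24 by norm_num) (by norm_num) H
  rwa [show 2 * 2 = 4 from rfl] at this

theorem mu_X_mu {n : ℕ} [NeZero n] (v l u k : ZMod n) (f : E n) :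
    mu v (X l * mu u (X k * f)) = mu (v * u) (X (u * l + k) * f) := by
  refine E_ext fun i => ?_
  change (X l * mu u (X k * f)) (v * i) = (X (u * l + k) * f) (v * u * i)
  rw [X_mul, X_mul]
  change (X k * f) (u * (v * i - l)) = _
  rw [X_mul]
  congr 1
  ring

theorem pure_main (r : E 48) (H : Hyp 1 r) : False := by
  -- level 12 normal form, lifted to level 24
  have key : ∀ s : E 24, Hyp 2 s → wt s % 4 = 1 → Red (f12 s) (dec 12 157) ∨ Red (f12 s) (dec 12 327) := by
    intro s Hs _
    exact main12 _ (Hyp12 s Hs) (wtf12 s Hs.1)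
  have H24 : ∀ r : E 48, Hyp 1 r → Hyp 2 (f24 r) := Hyp24
  -- s with given fold is reducible to 84255
  have red : ∀ (m t : ℕ) (hints : List ℕ), unitb 24 4 m = true → dec 12 t = f12 (dec 24 m) →
      go leaf24 ((List.range' 1 6).map (bm 24 12 m)) m hints = some [] →
      ∀ s : E 24, Hyp 2 s → wt s % 4 = 1 → f12 s = dec 12 t → Red s (dec 24 84255) := by
    intro m t hints hm ht hg s Hs hw hf
    have sp := go_spec leaf24 (fun x => Hyp 2 x → wt x % 4 = 1 → Red x (dec 24 84255)) leaf24_spec _ _ _ _ hg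
    rcases lift24 m t hm ht s Hs.1 hf with h | h
    · exact sp s h Hs hw
    · exact Red_X _ _ _ (sp _ h (Hyp_X Hs _) (by rw [wt_X_mul]; exact hw))
  have red' : Red (f24 r) (dec 24 84255) := by
    have trans : ∀ t : ℕ, Red (f12 (f24 r)) (dec 12 t) →
        (∀ s : E 24, Hyp 2 s → wt s % 4 = 1 → f12 s = dec 12 t → Red s (dec 24 84255)) → Red (f24 r) (dec 24 84255) := by
      intro t hR hs
      obtain ⟨k, u, hu, e⟩ := hR
      obtain ⟨k', rfl⟩ := ZMod.ringHom_surjective (ZMod.castHom (show 12 ∣ 24 by norm_num) (ZMod 12)) k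
      obtain ⟨u', hu'⟩ := ZMod.unitsMap_surjective (show 12 ∣ 24 by norm_num) (⟨u, u, hu, hu⟩ : (ZMod 12)ˣ)
      have e1 : (ZMod.castHom (show 12 ∣ 24 by norm_num) (ZMod 12)) (u' : ZMod 24) = u := congrArg Units.val hu'
      have uu : (u' : ZMod 24) * u' = 1 := by
        have : ∀ x y : ZMod 24, x * y = 1 → x * x = 1 := by decide +kernel
        exact this _ _ (Units.mul_inv u')
      obtain ⟨l, v, hv, e2⟩ := hs (mu (u' : ZMod 24) (X k' * f24 r)) (Hyp_mu (Hyp_X (H24 r H) k') uu)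
        (by rw [wt_mu uu, wt_X_mul]; exact wtf24 r H.1)
        (by rw [f12, fo_mu _ uu, fo_mul, fo_X, e1]; exact e)
      refine ⟨u' * l + k', v * u', ?_, ?_⟩
      · calc v * (u' : ZMod 24) * (v * u') = (v * v) * (u' * u') := by ring
          _ = 1 := by rw [hv, uu, one_mul]
      · rw [← e2]
        exact (mu_X_mu _ _ _ _ _).symm
    rcases key (f24 r) (H24 r H) (wtf24 r H.1) with h | h
    · exact trans 157 h (red _ _ _ (by decide +kernel) (E_dec (by decide +kernel)) go157)
    · exact trans 327 h (red _ _ _ (by decide +kernel) (E_dec (by decide +kernel)) go327)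
  obtain ⟨r', H', hf⟩ := Red_lift _ r H _ red'
  rcases lift48 r' H'.1 hf with h | h
  · exact go48_spec _ h H'
  · exact go48_spec _ h (Hyp_X H' _)

end NB

namespace NB
set_option linter.unusedSectionVars false

section poisson
variable {ι : Type*} [Fintype ι]

theorem dot_comm (x y : ι → ZMod 2) : dot x y = dot y x := by
  unfold dot; exact Finset.sum_congr rfl fun i _ => mul_comm _ _
theorem dot_add (x y z : ι → ZMod 2) : dot x (y + z) = dot x y + dot x z := by
  unfold dot; simp [mul_add, Finset.sum_add_distrib]
theorem add_dot (x y z : ι → ZMod 2) : dot (x + y) z = dot x z + dot y z := by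
  unfold dot; simp [add_mul, Finset.sum_add_distrib]
theorem dot_zero (x : ι → ZMod 2) : dot x 0 = 0 := by simp [dot]
theorem zero_dot (x : ι → ZMod 2) : dot 0 x = 0 := by simp [dot]
theorem dot_smul (c : ZMod 2) (x y : ι → ZMod 2) : dot x (c • y) = c * dot x y := by
  unfold dot; rw [Finset.mul_sum]
  refine Finset.sum_congr rfl fun i _ => ?_
  simp only [Pi.smul_apply, smul_eq_mul]; ring
theorem vadd_self (x : ι → ZMod 2) : x + x = 0 := funext fun i => CharTwo.add_self_eq_zero (x i)

variable {R : Type*} [CommRing R]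

/-- sign character -/
def sg (R : Type*) [CommRing R] (a : ZMod 2) : R := if a = 0 then 1 else -1

theorem sg_add (a b : ZMod 2) : sg R (a + b) = sg R a * sg R b := by
  have h1 : (1 : ZMod 2) + 1 = 0 := by decide
  have h2 : (1 : ZMod 2) ≠ 0 := by decide
  rcases val_eq_zero_or a with rfl | rfl <;> rcases val_eq_zero_or b with rfl | rfl <;>
    simp [sg, h1]
theorem sg_zero : sg R 0 = 1 := by simp [sg]

theorem sg_sum {κ : Type*} (s : Finset κ) (f : κ → ZMod 2) : sg R (∑ i ∈ s, f i) = ∏ i ∈ s, sg R (f i) := by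
  classical
  induction s using Finset.induction_on with
  | empty => simp [sg_zero]
  | insert a s ha ih => rw [Finset.sum_insert ha, Finset.prod_insert ha, sg_add, ih]

theorem wt_prod (z : R) (u : ι → ZMod 2) : ∏ i, (if u i ≠ 0 then z else 1) = z ^ hammingNorm u := by
  classical
  rw [Finset.prod_ite]
  simp [hammingNorm]

open Classical in
theorem poly_prod (z : R) (c : ι → ZMod 2) :
    (1 - z) ^ hammingNorm c * (1 + z) ^ (Fintype.card ι - hammingNorm c) =
      ∑ u : ι → ZMod 2, sg R (dot c u) * z ^ hammingNorm u := by
  classical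
  have h1 : (1 - z) ^ hammingNorm c * (1 + z) ^ (Fintype.card ι - hammingNorm c) =
      ∏ i, ∑ b : ZMod 2, sg R (c i * b) * (if b ≠ 0 then z else 1) := by
    have : ∀ i, ∑ b : ZMod 2, sg R (c i * b) * (if b ≠ 0 then z else 1) =
        if c i ≠ 0 then 1 - z else 1 + z := by
      intro i
      rw [show (Finset.univ : Finset (ZMod 2)) = {0, 1} from rfl, Finset.sum_pair (by decide)]
      have h2 : (1 : ZMod 2) ≠ 0 := by decide
      rcases val_eq_zero_or (c i) with h | h <;> simp [sg, h]
      ring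
    rw [Finset.prod_congr rfl fun i _ => this i, Finset.prod_ite, Finset.prod_const, Finset.prod_const]
    congr 2
    have := Finset.card_filter_add_card_filter_not (s := (Finset.univ : Finset ι)) (fun i => c i ≠ 0)
    rw [Finset.card_univ] at this
    rw [← this]
    unfold hammingNorm
    omega
  rw [h1, Finset.prod_univ_sum, Fintype.piFinset_univ]
  refine Finset.sum_congr rfl fun u _ => ?_
  rw [Finset.prod_mul_distrib, wt_prod, dot, sg_sum]

theorem char_sum (C : Submodule (ZMod 2) (ι → ZMod 2)) (hC : IsSelfDual C) [Fintype C]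
    [DecidablePred (· ∈ C)] (y : ι → ZMod 2) :
    ∑ c : C, sg ℤ (dot c y) = if y ∈ C then (Fintype.card C : ℤ) else 0 := by
  split_ifs with h
  · have : ∀ c : C, sg ℤ (dot c y) = 1 := by
      intro c
      rw [(hC c).mp c.2 y h, sg_zero]
    simp [this]
  · rw [hC y] at h
    push Not at h
    obtain ⟨d, hd, hd'⟩ := h
    have h1 : dot d y = 1 := by
      rw [dot_comm]; exact (val_eq_zero_or _).resolve_left hd'
    have e : ∑ c : C, sg ℤ (dot c y) = ∑ c : C, sg ℤ (dot ((c : ι → ZMod 2) + d) y) := by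
      symm
      exact Fintype.sum_equiv (Equiv.addRight (⟨d, hd⟩ : C)) _ _ fun c => rfl
    have e2 : ∀ c : C, sg ℤ (dot ((c : ι → ZMod 2) + d) y) = - sg ℤ (dot c y) := by
      intro c
      rw [add_dot, sg_add, h1]
      simp [sg]
    rw [Finset.sum_congr rfl fun c _ => e2 c, Finset.sum_neg_distrib] at e
    omega

open Classical in
theorem poisson (C : Submodule (ZMod 2) (ι → ZMod 2)) (hC : IsSelfDual C) (x : ι → ZMod 2)
    (z : R) :
    ∑ c : C, sg R (dot c x) * ((1 - z) ^ hammingNorm (c : ι → ZMod 2) * (1 + z) ^ (Fintype.card ι - hammingNorm (c : ι → ZMod 2))) =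
      (Fintype.card C : R) * ∑ u : ι → ZMod 2, if x + u ∈ C then z ^ hammingNorm u else 0 := by
  simp only [poly_prod, Finset.mul_sum]
  rw [Finset.sum_comm]
  refine Finset.sum_congr rfl fun u _ => ?_
  have h := congrArg (Int.castRingHom R) (char_sum C hC (x + u))
  rw [map_sum] at h
  have hs : ∀ a, Int.castRingHom R (sg ℤ a) = sg R a := by
    intro a; unfold sg; split_ifs <;> simp
  simp only [hs] at h
  have : ∀ c : C, sg R (dot c x) * (sg R (dot c u) * z ^ hammingNorm u) = sg R (dot c (x + u)) * z ^ hammingNorm u := by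
    intro c; rw [dot_add, sg_add]; ring
  rw [Finset.sum_congr rfl fun c _ => this c, ← Finset.sum_mul, h]
  split_ifs <;> simp

open Classical in
theorem card_sd (C : Submodule (ZMod 2) (ι → ZMod 2)) (hC : IsSelfDual C) :
    Fintype.card C ^ 2 = 2 ^ Fintype.card ι := by
  have h := poisson (R := ℤ) C hC 0 1
  rw [Finset.sum_eq_single 0] at h
  · simp only [zero_add, one_pow, Finset.sum_boole, ZeroMemClass.coe_zero, hammingNorm_zero] at h
    rw [zero_dot, sg_zero, Nat.sub_zero, one_mul, pow_zero, one_mul, ← Fintype.card_subtype] at h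
    rw [sq]
    have h' : ((2 ^ Fintype.card ι : ℕ) : ℤ) = ((Fintype.card C * Fintype.card C : ℕ) : ℤ) := by
      push_cast
      exact h
    exact_mod_cast h'.symm
  · intro c _ hc
    have : hammingNorm (c : ι → ZMod 2) ≠ 0 := by
      rw [hammingNorm_ne_zero_iff]
      intro e; exact hc (Subtype.ext e)
    simp [this]
  · simp

theorem one_mem (C : Submodule (ZMod 2) (ι → ZMod 2)) (hC : IsSelfDual C) : (fun _ => 1) ∈ C := by
  rw [hC]
  intro y hy
  rw [← (hC y).mp hy y hy]
  unfold dot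
  refine Finset.sum_congr rfl fun i _ => ?_
  rcases val_eq_zero_or (y i) with h | h <;> rw [h] <;> rfl

open Classical in
theorem card96 {ι : Type*} [Fintype ι] (hι : Fintype.card ι = 96) (C : Submodule (ZMod 2) (ι → ZMod 2)) (hC : IsSelfDual C) :
    Fintype.card C = 2 ^ 48 := by
  have h := card_sd C hC
  rw [hι, show (2 : ℕ) ^ 96 = (2 ^ 48) ^ 2 from by norm_num] at h
  exact Nat.pow_left_injective (n := 2) (by norm_num) h

/-- the functional attached to a neighbor -/
theorem phi_exists {ι : Type*} [Fintype ι] (hι : Fintype.card ι = 96) (C C' : Submodule (ZMod 2) (ι → ZMod 2))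
    (hC : IsSelfDual C) (hC' : IsSelfDual C') (hnb : Module.finrank (ZMod 2) ↥(C ⊓ C') = 47)
    (hw : ∀ x ∈ C', x ≠ 0 → 16 < hammingNorm x) :
    ∃ φ : (ι → ZMod 2) → ZMod 2, (∀ a b, φ (a + b) = φ a + φ b) ∧ φ (fun _ => 1) = 0 ∧
      ∀ c ∈ C, c ≠ 0 → hammingNorm c ≤ 16 → φ c = 1 := by
  classical
  have f48 : Module.finrank (ZMod 2) C' = 48 := by
    have h1 := card96 hι C' hC'
    have h2 := Module.card_eq_pow_finrank (K := ZMod 2) (V := C')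
    rw [ZMod.card] at h2
    exact Nat.pow_right_injective (le_refl 2) (h2.symm.trans h1)
  have hlt : C ⊓ C' < C' := by
    refine lt_of_le_of_ne inf_le_right fun e => ?_
    rw [e] at hnb; omega
  obtain ⟨y, hy, hyn⟩ := Set.exists_of_ssubset hlt
  have hsup : (C ⊓ C') ⊔ Submodule.span (ZMod 2) {y} = C' := by
    apply Submodule.eq_of_le_of_finrank_le
    · refine sup_le inf_le_right ?_
      rw [Submodule.span_singleton_le_iff_mem]; exact hy
    · have : C ⊓ C' < (C ⊓ C') ⊔ Submodule.span (ZMod 2) {y} := by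
        refine lt_of_le_of_ne le_sup_left fun e => hyn ?_
        have : y ∈ (C ⊓ C') ⊔ Submodule.span (ZMod 2) {y} :=
          Submodule.mem_sup_right (Submodule.mem_span_singleton_self y)
        rw [← e] at this; exact this
      have := Submodule.finrank_lt_finrank_of_lt this
      omega
  refine ⟨fun c => dot c y, fun a b => add_dot a b y, ?_, ?_⟩
  · change dot _ y = 0
    rw [dot_comm]; exact (hC' y).mp hy _ (one_mem C' hC')
  · intro c hc hc0 hcw
    refine (val_eq_zero_or _).resolve_left fun h0 => ?_
    change dot c y = 0 at h0
    have : c ∈ C' := by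
      rw [hC']
      intro z hz
      rw [← hsup, Submodule.mem_sup] at hz
      obtain ⟨a, ha, b, hb, rfl⟩ := hz
      obtain ⟨t, rfl⟩ := Submodule.mem_span_singleton.mp hb
      rw [dot_add, dot_smul, h0, (hC c).mp hc a ha.1, mul_zero, add_zero]
    have := hw c this hc0
    omega

end poisson
end NB

namespace NB
open Polynomial

/-- Krawtchouk coefficients (doubled) of the annihilator polynomial -/
def Nc : ℕ → ℤ
  | 0 => 3712313855250
  | 1 => 3712313855250
  | 2 => 716411445750
  | 3 => 586154819250
  | 4 => 108547188750
  | 5 => 65128313250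
  | 6 => 11493231750
  | 7 => 3831077250
  | 8 => 638512875
  | _ => 0

theorem Nc_nonneg (j : ℕ) : 0 ≤ Nc j := by
  unfold Nc; split <;> norm_num

noncomputable def La : ℤ[X] →+ ℤ where
  toFun p := ∑ j ∈ Finset.range 9, Nc j * p.coeff (2 * j)
  map_zero' := by simp
  map_add' p q := by simp [mul_add, Finset.sum_add_distrib]

theorem La_def (p : ℤ[X]) : La p = ∑ j ∈ Finset.range 9, Nc j * p.coeff (2 * j) := rfl

def cho (n k : ℕ) : ℕ := n.descFactorial k / k.factorial

def Kf (w : ℕ) : ℤ := ∑ j ∈ Finset.range 9, Nc j *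
  ∑ i ∈ Finset.range (2 * j + 1), (-1) ^ i * (cho w i : ℤ) * (cho (96 - w) (2 * j - i) : ℤ)

theorem La_eq (w : ℕ) : La ((1 - Polynomial.X) ^ w * (1 + Polynomial.X) ^ (96 - w)) = Kf w := by
  rw [La_def, Kf]
  refine Finset.sum_congr rfl fun j _ => ?_
  congr 1
  rw [coeff_mul, Finset.Nat.sum_antidiagonal_eq_sum_range_succ_mk]
  refine Finset.sum_congr rfl fun i _ => ?_
  have h1 : ((1 - Polynomial.X : ℤ[X]) ^ w).coeff i = (-1) ^ i * (w.choose i : ℤ) := by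
    have e : (1 - Polynomial.X : ℤ[X]) ^ w = ((1 + Polynomial.X) ^ w : ℤ[X]).comp (C (-1) * Polynomial.X) := by
      simp [sub_eq_add_neg]
    rw [e, comp_C_mul_X_coeff, coeff_one_add_X_pow, mul_comm]
  rw [h1, coeff_one_add_X_pow, Nat.choose_eq_descFactorial_div_factorial, Nat.choose_eq_descFactorial_div_factorial]
  rfl

theorem Kf_table : ∀ m < 25, (m = 0 ∨ m = 24 → 2 * Kf (4 * m) = 2 ^ 48 * Nc 1) ∧
    (m = 4 ∨ m = 20 → 0 < Kf (4 * m)) ∧ (5 ≤ m → m ≤ 19 → Kf (4 * m) = 0) := by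
  decide +kernel

theorem La_sg (a : ZMod 2) (p : ℤ[X]) : La (sg ℤ[X] a * p) = sg ℤ a * La p := by
  unfold sg; split_ifs <;> simp

theorem La_nat (m : ℕ) (p : ℤ[X]) : La (m * p) = m * La p := by
  rw [← nsmul_eq_mul, map_nsmul, nsmul_eq_mul]

theorem La_pow (k : ℕ) : 0 ≤ La (Polynomial.X ^ k) := by
  rw [La_def]
  refine Finset.sum_nonneg fun j _ => mul_nonneg (Nc_nonneg j) ?_
  rw [coeff_X_pow]; split_ifs <;> norm_num

theorem La_two : La (Polynomial.X ^ 2) = Nc 1 := by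
  rw [La_def]
  rw [Finset.sum_eq_single 1]
  · simp
  · intro b _ hb
    rw [coeff_X_pow, if_neg (by omega), mul_zero]
  · simp

section
variable {ι : Type*} [Fintype ι]

theorem compl_wt (c : ι → ZMod 2) : hammingNorm (c + fun _ => 1) = Fintype.card ι - hammingNorm c := by
  classical
  have := Finset.card_filter_add_card_filter_not (s := (Finset.univ : Finset ι)) (fun i => c i ≠ 0)
  rw [Finset.card_univ] at this
  rw [← this]
  have e : hammingNorm (c + fun _ => 1) = (Finset.univ.filter fun i => ¬ (c i ≠ 0)).card := by
    unfold hammingNorm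
    congr 1
    ext i
    simp only [Finset.mem_filter, Finset.mem_univ, true_and, Pi.add_apply]
    generalize c i = t
    exact (by decide : ∀ t : ZMod 2, t + 1 ≠ 0 ↔ ¬ t ≠ 0) t
  rw [e]; unfold hammingNorm; omega

theorem kraw (hι : Fintype.card ι = 96) (C : Submodule (ZMod 2) (ι → ZMod 2)) (hC : IsSelfDual C)
    (hde : ∀ c ∈ C, 4 ∣ hammingNorm c) (hmin : ∀ c ∈ C, c ≠ 0 → 16 ≤ hammingNorm c)
    (x : ι → ZMod 2) (hx : hammingNorm x = 2)
    (h16 : ∀ c ∈ C, hammingNorm c = 16 → dot c x = 1)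
    (c0 : ι → ZMod 2) (hc0 : c0 ∈ C) (hw0 : hammingNorm c0 = 16) : False := by
  classical
  have P := congrArg La (poisson C hC x (Polynomial.X : ℤ[X]))
  rw [map_sum, La_nat, map_sum, card96 hι C hC, hι] at P
  simp only [La_sg, La_eq] at P
  -- right hand side
  have R : Nc 1 ≤ ∑ u : ι → ZMod 2, La (if x + u ∈ C then Polynomial.X ^ hammingNorm u else 0) := by
    have h1 := Finset.single_le_sum (s := Finset.univ) (f := fun u : ι → ZMod 2 => La (if x + u ∈ C then Polynomial.X ^ hammingNorm u else 0))
      (fun u _ => by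
        change 0 ≤ La (if x + u ∈ C then Polynomial.X ^ hammingNorm u else 0)
        split_ifs
        · exact La_pow _
        · simp) (Finset.mem_univ x)
    refine le_trans (le_of_eq ?_) h1
    change _ = La (if x + x ∈ C then Polynomial.X ^ hammingNorm x else 0)
    rw [if_pos (by rw [vadd_self]; exact C.zero_mem), hx, La_two]
  have o1 := one_mem C hC
  have hx1 : dot (fun _ => 1) x = 0 := by
    unfold dot
    simp only [one_mul]
    have : ∀ i, x i = (if x i ≠ 0 then 1 else 0) := by
      intro i; generalize x i = t; revert t; decide
    rw [Finset.sum_congr rfl fun i _ => this i, Finset.sum_boole]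
    change ((hammingNorm x : ℕ) : ZMod 2) = 0
    rw [hx]; rfl
  have T0 := (Kf_table 0 (by norm_num)).1 (Or.inl rfl)
  have T24 := (Kf_table 24 (by norm_num)).1 (Or.inr rfl)
  have T4 := (Kf_table 4 (by norm_num)).2.1 (Or.inl rfl)
  have T20 := (Kf_table 20 (by norm_num)).2.1 (Or.inr rfl)
  norm_num only at T0 T24 T4 T20
  have hn1 : hammingNorm (fun _ : ι => (1 : ZMod 2)) = 96 := by
    have := compl_wt (0 : ι → ZMod 2)
    rwa [zero_add, hammingNorm_zero, Nat.sub_zero, hι] at this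
  have cl : ∀ c ∈ C, c = 0 ∨ c = (fun _ => 1) ∨ (dot c x = 1 ∧ (hammingNorm c = 16 ∨ hammingNorm c = 80)) ∨
      Kf (hammingNorm c) = 0 := by
    intro c hc
    by_cases h0 : c = 0
    · exact Or.inl h0
    by_cases h1 : c = fun _ => 1
    · exact Or.inr (Or.inl h1)
    right; right
    have m1 := hmin c hc h0
    have c1 := compl_wt c
    rw [hι] at c1
    have m2 := hmin _ (C.add_mem hc o1) (by
      intro e
      apply h1
      have := congrArg (· + fun _ => (1 : ZMod 2)) e
      simpa [add_assoc, vadd_self] using this)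
    obtain ⟨m, hm⟩ := hde c hc
    by_cases hm4 : m = 4
    · left
      exact ⟨h16 c hc (by omega), Or.inl (by omega)⟩
    by_cases hm20 : m = 20
    · left
      have := h16 _ (C.add_mem hc o1) (by omega)
      rw [add_dot, hx1, add_zero] at this
      exact ⟨this, Or.inr (by omega)⟩
    right
    rw [hm]
    exact (Kf_table m (by omega)).2.2 (by omega) (by omega)
  have sg1 : sg ℤ 1 = -1 := by simp [sg]
  have ne01 : (0 : ι → ZMod 2) ≠ fun _ => 1 := by
    intro e; rw [← e, hammingNorm_zero] at hn1; omega
  have L : ∑ c : C, sg ℤ (dot c x) * Kf (hammingNorm (c : ι → ZMod 2)) <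
      ∑ c : C, ((if c = 0 then Kf 0 else 0) + (if c = ⟨fun _ => 1, o1⟩ then Kf 96 else 0)) := by
    apply Finset.sum_lt_sum
    · rintro ⟨c, hc⟩ _
      simp only [Subtype.mk.injEq, Submodule.mk_eq_zero]
      rcases cl c hc with h | h | h | h
      · rw [if_pos h, if_neg (by rw [h]; exact ne01), h, zero_dot, sg_zero, hammingNorm_zero, one_mul, add_zero]
      · rw [if_neg (by rw [h]; exact ne01.symm), if_pos h, h, hx1, sg_zero, hn1, one_mul, zero_add]
      · rw [h.1, sg1]
        rw [if_neg (by rintro rfl; rw [hammingNorm_zero] at h; omega),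
          if_neg (by rintro rfl; rw [hn1] at h; omega)]
        rcases h.2 with h | h <;> rw [h] <;> linarith
      · rw [h, mul_zero]
        apply add_nonneg <;> split_ifs <;> linarith [Nc_nonneg 1]
    · refine ⟨⟨c0, hc0⟩, Finset.mem_univ _, ?_⟩
      simp only [Subtype.mk.injEq, Submodule.mk_eq_zero]
      rw [if_neg (by rintro rfl; rw [hammingNorm_zero] at hw0; omega),
          if_neg (by rintro rfl; rw [hn1] at hw0; omega), h16 c0 hc0 hw0, hw0, sg1]
      linarith
  rw [P, Finset.sum_add_distrib, Finset.sum_ite_eq', Finset.sum_ite_eq', if_pos (Finset.mem_univ _),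
    if_pos (Finset.mem_univ _)] at L
  push_cast at L
  have : (2 : ℤ) ^ 48 * Nc 1 ≤ 2 ^ 48 * ∑ u : ι → ZMod 2, La (if x + u ∈ C then Polynomial.X ^ hammingNorm u else 0) :=
    mul_le_mul_of_nonneg_left R (by positivity)
  norm_num only at L this
  linarith

end
end NB

namespace NB
set_option linter.unusedSectionVars false

section gen
variable {ι κ : Type*} [Fintype ι] [Fintype κ]

theorem hn_sum (x : ι → ZMod 2) : hammingNorm x = ∑ i, (x i).val := by
  unfold hammingNorm
  rw [Finset.card_filter]
  refine Finset.sum_congr rfl fun i _ => ?_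
  exact (by decide : ∀ t : ZMod 2, (if t ≠ 0 then 1 else 0) = t.val) (x i)

theorem hn_elim (a : ι → ZMod 2) (b : κ → ZMod 2) :
    hammingNorm (Sum.elim a b) = ∑ i, (a i).val + ∑ i, (b i).val := by
  rw [hn_sum, Fintype.sum_sum_type]; rfl

theorem dot_elim (a c : ι → ZMod 2) (b d : κ → ZMod 2) :
    dot (Sum.elim a b) (Sum.elim c d) = ∑ i, a i * c i + ∑ i, b i * d i := by
  unfold dot
  rw [Fintype.sum_sum_type]; rfl

theorem hn_add (x y : ι → ZMod 2) :
    hammingNorm (x + y) + 2 * ∑ i, (x i).val * (y i).val = hammingNorm x + hammingNorm y := by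
  rw [hn_sum, hn_sum, hn_sum, Finset.mul_sum, ← Finset.sum_add_distrib, ← Finset.sum_add_distrib]
  refine Finset.sum_congr rfl fun i _ => ?_
  exact (by decide : ∀ s t : ZMod 2, (s + t).val + 2 * (s.val * t.val) = s.val + t.val) (x i) (y i)

theorem hn_add_four (x y : ι → ZMod 2) (h : dot x y = 0) (hx : 4 ∣ hammingNorm x) (hy : 4 ∣ hammingNorm y) :
    4 ∣ hammingNorm (x + y) := by
  have h1 := hn_add x y
  have h2 : ((∑ i, (x i).val * (y i).val : ℕ) : ZMod 2) = 0 := by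
    rw [← h]; unfold dot; push_cast
    refine Finset.sum_congr rfl fun i _ => ?_
    rw [ZMod.natCast_zmod_val, ZMod.natCast_zmod_val]
  rw [ZMod.natCast_eq_zero_iff] at h2
  omega

theorem doubly_even (S : Set (ι → ZMod 2)) (C : Submodule (ZMod 2) (ι → ZMod 2)) (hS : C = Submodule.span (ZMod 2) S)
    (hC : IsSelfDual C) (h : ∀ x ∈ S, 4 ∣ hammingNorm x) : ∀ x ∈ C, 4 ∣ hammingNorm x := by
  intro x hx
  rw [hS] at hx
  induction hx using Submodule.span_induction with
  | mem x hx => exact h x hx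
  | zero => rw [hammingNorm_zero]; exact dvd_zero 4
  | add x y hx hy ix iy =>
    rw [← hS] at hx hy
    exact hn_add_four x y ((hC x).mp hx y hy) ix iy
  | smul c x hx ix =>
    rcases val_eq_zero_or c with rfl | rfl
    · rw [zero_smul, hammingNorm_zero]; exact dvd_zero 4
    · rwa [one_smul]

theorem mem_gen [DecidableEq ι] (M : Matrix ι κ (ZMod 2)) (x : ι ⊕ κ → ZMod 2) :
    x ∈ Submodule.span (ZMod 2) (Set.range fun i : ι => Sum.elim (fun j => if j = i then (1 : ZMod 2) else 0) (M i)) ↔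
      ∃ a : ι → ZMod 2, x = Sum.elim a (fun j => ∑ i, a i * M i j) := by
  rw [Submodule.mem_span_range_iff_exists_fun]
  refine exists_congr fun a => ?_
  rw [eq_comm]
  have : ∑ i, a i • (Sum.elim (fun j => if j = i then (1 : ZMod 2) else 0) (M i) : ι ⊕ κ → ZMod 2) =
      Sum.elim a (fun j => ∑ i, a i * M i j) := by
    ext j
    rw [Finset.sum_apply]
    rcases j with j | j <;> simp
  rw [this]

end gen

/-! ### pure case -/

theorem pure_bridge (C : Submodule (ZMod 2) (ZMod 48 ⊕ ZMod 48 → ZMod 2)) (r : E 48)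
    (hg : ∀ a : E 48, (Sum.elim a (a * r) : ZMod 48 ⊕ ZMod 48 → ZMod 2) ∈ C)
    (hsd : IsSelfDual C) (hmin : ∀ x ∈ C, x ≠ 0 → 16 ≤ hammingNorm x)
    (φ : (ZMod 48 ⊕ ZMod 48 → ZMod 2) → ZMod 2) (hφ : ∀ a b, φ (a + b) = φ a + φ b)
    (h1 : ∀ c ∈ C, c ≠ 0 → hammingNorm c ≤ 16 → φ c = 1) : False := by
  have hw : ∀ a : E 48, hammingNorm (Sum.elim a (a * r) : ZMod 48 ⊕ ZMod 48 → ZMod 2) = wt a + wt (a * r) :=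
    fun a => hn_elim a (a * r)
  have h0 : ∀ a : E 48, a ≠ 0 → (Sum.elim a (a * r) : ZMod 48 ⊕ ZMod 48 → ZMod 2) ≠ 0 := by
    intro a ha e
    exact ha (E_ext fun i => congrFun e (Sum.inl i))
  apply pure_main r
  refine ⟨?_, fun a => φ (Sum.elim a (a * r)), ?_, ?_⟩
  · refine E_ext fun k => ?_
    have h := (hsd _).mp (hg 1) _ (hg (X k))
    replace h : ∑ i : ZMod 48, (1 : E 48) i * (X k : E 48) i + ∑ i : ZMod 48, ((1 : E 48) * r) i * (X k * r) i = 0 :=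
      (dot_elim (1 : E 48) (X k) ((1 : E 48) * r) (X k * r)).symm.trans h
    rw [one_mul r] at h
    have e1 : ∑ i : ZMod 48, (1 : E 48) i * (X k : E 48) i = (1 : E 48) k := by
      rw [Finset.sum_eq_single k]
      · rw [show (X k : E 48) k = 1 from if_pos rfl, mul_one]
      · intro b _ hb
        rw [show (X k : E 48) b = 0 from if_neg hb, mul_zero]
      · simp
    have e2 : ∑ i : ZMod 48, r i * (X k * r) i = (r * st r) k := by
      rw [mul_ap]
      refine Finset.sum_congr rfl fun i _ => ?_
      rw [X_mul]
      unfold st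
      rw [neg_sub]
    rw [e1, e2] at h
    exact (CharTwo.add_eq_zero.mp h).symm
  · intro a b
    refine Eq.trans (congrArg φ ?_) (hφ _ _)
    funext i
    rw [add_mul]
    rcases i with i | i <;> rfl
  · intro a ha
    rw [one_mul, ← hw]
    exact ⟨hmin _ (hg a) (h0 a ha), fun e => h1 _ (hg a) (h0 a ha) e.le⟩

/-! ### bordered case -/

/-- constant vector -/
def sJ (s : ZMod 2) : E 47 := fun _ => s

theorem X_sJ (k s) : X k * sJ s = sJ s := by
  refine E_ext fun i => ?_
  rw [X_mul]; rfl

def cn (s : ZMod 2) (a : E 47) : Fin 48 → ZMod 2 := Fin.cons (n := 47) (α := fun _ => ZMod 2) s a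

theorem cn_zero (s a) : cn s a 0 = s := rfl
theorem cn_succ (s a) (i : Fin 47) : cn s a (Fin.succ i) = a i := rfl

theorem cn_val (s a) : ∑ i, (cn s a i).val = s.val + wt a := by
  rw [Fin.sum_univ_succ]; rfl

theorem cn_add (s t a b) : cn (s + t) (a + b) = cn s a + cn t b := by
  funext i
  refine Fin.cases ?_ (fun j => ?_) i <;> rfl

theorem cn_dot (s t a b) : ∑ i, cn s a i * cn t b i = s * t + ∑ i : ZMod 47, a i * b i := by
  rw [Fin.sum_univ_succ]; rfl

def cwb (r : E 47) (s : ZMod 2) (a : E 47) : Fin 48 ⊕ Fin 48 → ZMod 2 :=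
  Sum.elim (cn s a) (cn (ep a) (sJ s + a * r))

theorem cwb_wt (r s a) : hammingNorm (cwb r s a) = s.val + wt a + ((ep a).val + wt (sJ s + a * r)) := by
  unfold cwb
  rw [hn_elim, cn_val, cn_val]

theorem cwb_add (r s t a b) : cwb r (s + t) (a + b) = cwb r s a + cwb r t b := by
  have h : sJ (s + t) + (a + b) * r = (sJ s + a * r) + (sJ t + b * r) := by
    have : sJ (s + t) = sJ s + sJ t := rfl
    rw [this]; ring
  unfold cwb
  rw [h, ep_add, cn_add, cn_add]
  funext i
  rcases i with i | i <;> rfl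

theorem cwb_shift_wt (r s a k) : hammingNorm (cwb r s (X k * a)) = hammingNorm (cwb r s a) := by
  rw [cwb_wt, cwb_wt, wt_X_mul, ep_mul, ep_X, one_mul]
  have : sJ s + X k * a * r = X k * (sJ s + a * r) := by
    rw [mul_add, X_sJ, mul_assoc]
  rw [this, wt_X_mul]

theorem cwb_dot (r s t a b) : dot (cwb r s a) (cwb r t b) = s * t + ∑ i : ZMod 47, a i * b i +
    (ep a * ep b + ∑ i : ZMod 47, (sJ s + a * r) i * (sJ t + b * r) i) := by
  unfold cwb
  rw [dot_elim, cn_dot, cn_dot]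

theorem wt_r_mod (r : E 47) (he : ep r = 0) (hr : ∀ k, k ≠ 0 → (r * st r) k = 1) : wt r % 4 = 2 := by
  have heven : wt r % 2 = 0 := by
    rw [ep_wt, ZMod.natCast_eq_zero_iff] at he
    omega
  have h47 : ∀ k : ZMod 47, -k = k → k = 0 := by decide +kernel
  have hS : ∑ k ∈ (Finset.univ.erase (0 : ZMod 47)), ((Ac r k : ZMod 4) + 1) = 0 := by
    refine Finset.sum_involution (fun k _ => -k) ?_ ?_ ?_ ?_
    · intro k hk
      rw [Ac_neg]
      have : ((Ac r k : ℕ) : ZMod 2) = 1 := by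
        rw [Ac_cast, hr k (Finset.ne_of_mem_erase hk)]
      have h1 : Ac r k % 2 = 1 := by
        have := (ZMod.natCast_eq_natCast_iff (Ac r k) 1 2).mp (by rw [this]; rfl)
        exact this
      obtain ⟨q, hq⟩ : ∃ q, Ac r k + 1 = 2 * q := ⟨(Ac r k + 1) / 2, by omega⟩
      have h2 : ((Ac r k : ZMod 4) + 1) = 2 * q := by exact_mod_cast congrArg (Nat.cast : ℕ → ZMod 4) hq
      rw [h2, ← two_mul, ← mul_assoc]
      have : (2 * 2 : ZMod 4) = 0 := by decide
      rw [this, zero_mul]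
    · intro k hk _ hh
      exact Finset.ne_of_mem_erase hk (h47 k hh)
    · intro k hk
      exact Finset.mem_erase.mpr ⟨fun e => Finset.ne_of_mem_erase hk (neg_eq_zero.mp e), Finset.mem_univ _⟩
    · intro k _
      exact neg_neg k
  rw [Finset.sum_add_distrib, Finset.sum_const, Finset.card_erase_of_mem (Finset.mem_univ _), Finset.card_univ, ZMod.card] at hS
  have e1 : wt r ^ 2 = wt r + ∑ k ∈ (Finset.univ.erase (0 : ZMod 47)), Ac r k := by
    rw [← Ac_sum, ← Finset.add_sum_erase _ _ (Finset.mem_univ (0 : ZMod 47)), Ac_zero]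
  have e2 : (∑ k ∈ (Finset.univ.erase (0 : ZMod 47)), Ac r k + 46) % 4 = 0 := by
    have : ((∑ k ∈ (Finset.univ.erase (0 : ZMod 47)), Ac r k + 46 : ℕ) : ZMod 4) = 0 := by
      rw [Nat.cast_add, Nat.cast_sum]
      exact hS
    rw [ZMod.natCast_eq_zero_iff] at this
    omega
  have e3 : wt r ^ 2 % 4 = 0 := by
    rcases (by omega : wt r % 4 = 0 ∨ wt r % 4 = 2) with h | h <;> simp [Nat.pow_mod, h]
  omega

theorem sum47 (t : ZMod 2) : ∑ _k : ZMod 47, t = t := by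
  rw [Finset.sum_const, Finset.card_univ, ZMod.card, nsmul_eq_mul]
  have : ((47 : ℕ) : ZMod 2) = 1 := by decide
  rw [this, one_mul]

theorem avg (r : E 47) (φ : (Fin 48 ⊕ Fin 48 → ZMod 2) → ZMod 2) (hφ : ∀ a b, φ (a + b) = φ a + φ b) :
    ∃ A B : ZMod 2, ∀ s a, ∑ k : ZMod 47, φ (cwb r s (X k * a)) = A * s + B * ep a := by
  have φ0 : φ 0 = 0 := by simpa using hφ 0 0
  have cw0 : ∀ r, cwb r 0 0 = 0 := by
    intro r
    have := cwb_add r 0 0 0 0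
    rw [add_zero, add_zero] at this
    exact left_eq_add.mp this
  let F : E 47 →+ ZMod 2 := ⟨⟨fun a => ∑ k : ZMod 47, φ (cwb r 0 (X k * a)), by
    simp only [mul_zero, cw0, φ0, Finset.sum_const_zero]⟩, by
    intro a b
    change ∑ k : ZMod 47, φ (cwb r 0 (X k * (a + b))) = _ + _
    rw [← Finset.sum_add_distrib]
    refine Finset.sum_congr rfl fun k _ => ?_
    rw [mul_add, ← hφ, ← cwb_add, add_zero]⟩
  have FX : ∀ j, F (X j) = F 1 := by
    intro j
    change ∑ k : ZMod 47, φ (cwb r 0 (X k * X j)) = ∑ k : ZMod 47, φ (cwb r 0 (X k * 1))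
    simp only [X_add, mul_one]
    exact Fintype.sum_equiv (Equiv.addRight j) _ _ fun k => rfl
  refine ⟨φ (cwb r 1 0), F 1, ?_⟩
  intro s a
  have e1 : ∀ k : ZMod 47, φ (cwb r s (X k * a)) = φ (cwb r s 0) + φ (cwb r 0 (X k * a)) := by
    intro k
    rw [← hφ, ← cwb_add, add_zero, zero_add]
  rw [Finset.sum_congr rfl fun k _ => e1 k, Finset.sum_add_distrib, sum47]
  refine congrArg₂ (fun x y => x + y) ?_ ?_
  · rcases val_eq_zero_or s with rfl | rfl
    · rw [cw0, φ0, mul_zero]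
    · rw [mul_one]
  · change F a = _
    conv_lhs => rw [expand a]
    rw [map_sum]
    refine Eq.trans ?_ (Finset.mul_sum (Finset.univ : Finset (ZMod 47)) (fun j => a j) (F 1)).symm
    refine Finset.sum_congr rfl fun j _ => ?_
    rcases val_eq_zero_or (a j) with h | h
    · rw [if_neg (by rw [h]; decide), map_zero, h, mul_zero]
    · rw [if_pos h, FX, h, mul_one]

theorem bordered_bridge (C : Submodule (ZMod 2) (Fin 48 ⊕ Fin 48 → ZMod 2)) (r : E 47)
    (hg : ∀ x, x ∈ C ↔ ∃ s a, x = cwb r s a) (S : Set (Fin 48 ⊕ Fin 48 → ZMod 2))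
    (hS : C = Submodule.span (ZMod 2) S)
    (hS' : ∀ x ∈ S, x = cwb r 1 0 ∨ ∃ k, x = cwb r 0 (X k))
    (hsd : IsSelfDual C) (hmin : ∀ x ∈ C, x ≠ 0 → 16 ≤ hammingNorm x)
    (c0 : Fin 48 ⊕ Fin 48 → ZMod 2) (hc0 : c0 ∈ C) (hw0 : hammingNorm c0 = 16)
    (φ : (Fin 48 ⊕ Fin 48 → ZMod 2) → ZMod 2) (hφ : ∀ a b, φ (a + b) = φ a + φ b)
    (hφ1 : φ (fun _ => 1) = 0)
    (h1 : ∀ c ∈ C, c ≠ 0 → hammingNorm c ≤ 16 → φ c = 1) : False := by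
  have mem : ∀ s a, cwb r s a ∈ C := fun s a => (hg _).mpr ⟨s, a, rfl⟩
  have sJ0 : sJ 0 = 0 := rfl
  have ep0 : ep (0 : E 47) = 0 := by simpa using ep_add (0 : E 47) 0
  have her : ep r = 0 := by
    have h := (hsd _).mp (mem 1 0) _ (mem 0 (X 0))
    rw [cwb_dot, ep0, zero_mul, mul_zero, zero_add, zero_add, X_zero, one_mul, zero_mul, sJ0, zero_add, add_zero] at h
    have e1 : ∑ i : ZMod 47, (0 : E 47) i * (1 : E 47) i = 0 :=
      Finset.sum_eq_zero fun i _ => zero_mul _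
    rw [e1, zero_add] at h
    rw [← h]
    unfold ep
    exact Finset.sum_congr rfl fun i _ => (one_mul _).symm
  have hrr : ∀ k, k ≠ 0 → (r * st r) k = 1 := by
    intro k hk
    have h := (hsd _).mp (mem 0 (X 0)) _ (mem 0 (X k))
    rw [cwb_dot, ep_X, ep_X, X_zero, sJ0, zero_add, zero_add, zero_mul, zero_add, one_mul, one_mul] at h
    have e1 : ∑ i : ZMod 47, (1 : E 47) i * (X k : E 47) i = 0 := by
      refine Finset.sum_eq_zero fun i _ => ?_
      by_cases hi : i = 0
      · rw [show (X k : E 47) i = 0 from if_neg (by rw [hi]; exact hk.symm), mul_zero]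
      · rw [one_ap, if_neg hi, zero_mul]
    have e2 : ∑ i : ZMod 47, r i * (X k * r) i = (r * st r) k := by
      rw [mul_ap]
      refine Finset.sum_congr rfl fun i _ => ?_
      rw [X_mul]
      unfold st
      rw [neg_sub]
    rw [e1, e2, zero_add] at h
    exact (CharTwo.add_eq_zero.mp h).symm
  have hwr := wt_r_mod r her hrr
  have wX : ∀ k : ZMod 47, wt (X k : E 47) = 1 := by
    intro k
    have := wt_X_mul k (1 : E 47)
    rw [mul_one] at this
    rw [this]; decide +kernel
  have hde : ∀ x ∈ C, 4 ∣ hammingNorm x := by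
    refine doubly_even S C hS hsd ?_
    intro x hx
    rcases hS' x hx with rfl | ⟨k, rfl⟩
    · rw [cwb_wt, ep0, wt_zero, zero_mul, add_zero]
      decide +kernel
    · rw [cwb_wt, ep_X, wX, sJ0, zero_add, wt_X_mul]
      change 4 ∣ 0 + 1 + (1 + wt r)
      omega
  -- averaging
  obtain ⟨A, B, hAB⟩ := avg r φ hφ
  have key : ∀ s a, hammingNorm (cwb r s a) = 16 → A * s + B * ep a = 1 := by
    intro s a h
    rw [← hAB, ← sum47 1]
    refine Finset.sum_congr rfl fun k _ => ?_
    have hk := cwb_shift_wt r s a k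
    refine h1 _ (mem _ _) ?_ (by omega)
    rw [← hammingNorm_ne_zero_iff]; omega
  have epJ : ep (sJ 1) = 1 := by decide +kernel
  have one_eq : cwb r 1 (sJ 1) = fun _ => 1 := by
    have : sJ 1 * r = 0 := by
      refine E_ext fun i => ?_
      rw [mul_comm, mul_ap]
      change ∑ j, r j * 1 = 0
      rw [← her]; unfold ep
      exact Finset.sum_congr rfl fun j _ => mul_one _
    unfold cwb
    rw [this, add_zero, epJ]
    have : cn 1 (sJ 1) = fun _ => 1 := by
      funext i
      refine Fin.cases ?_ (fun j => ?_) i <;> rfl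
    rw [this]
    funext i
    rcases i with i | i <;> rfl
  have hAB1 : A + B = 0 := by
    have := hAB 1 (sJ 1)
    simp only [X_sJ, one_eq, hφ1, epJ, mul_one, Finset.sum_const_zero] at this
    exact this.symm
  have hBA : B = A := (CharTwo.add_eq_zero.mp hAB1).symm
  have hA : A = 1 := by
    obtain ⟨s, a, rfl⟩ := (hg c0).mp hc0
    have := key s a hw0
    rw [hBA] at this
    rcases val_eq_zero_or A with h | h
    · rw [h, zero_mul, zero_mul, add_zero] at this
      exact absurd this (by decide)
    · exact h
  refine kraw (by simp) C hsd hde hmin (Sum.elim (cn 1 0) (cn 1 0)) ?_ ?_ c0 hc0 hw0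
  · rw [hn_elim, cn_val, wt_zero]; rfl
  · intro c hc hcw
    obtain ⟨s, a, rfl⟩ := (hg c).mp hc
    have := key s a hcw
    rw [hBA, hA, one_mul, one_mul] at this
    unfold cwb
    rw [dot_elim, cn_dot, cn_dot, mul_one, mul_one]
    have z : ∀ b : E 47, ∑ i : ZMod 47, b i * (0 : E 47) i = 0 :=
      fun b => Finset.sum_eq_zero fun i _ => mul_zero _
    rw [z, z, add_zero, add_zero, this]

end NB

namespace NB

/-- reversed defining vector -/
def rv {n : ℕ} (v : ZMod n → ZMod 2) : E n := fun k => v (-k)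

theorem circ_mul {n : ℕ} [NeZero n] (v : ZMod n → ZMod 2) (a : E n) (j : ZMod n) :
    ∑ i : ZMod n, a i * v (i - j) = (a * rv v) j := by
  rw [mul_ap]
  refine Finset.sum_congr rfl fun i _ => ?_
  unfold rv
  rw [neg_sub]

theorem pure_case (v : Fin 48 → ZMod 2) (C : Submodule (ZMod 2) (Fin 48 ⊕ Fin 48 → ZMod 2))
    (hC : C = pureDCC (Matrix.circulant v)) (hsd : IsSelfDual C) (hmin : ∀ x ∈ C, x ≠ 0 → 16 ≤ hammingNorm x)
    (φ : (Fin 48 ⊕ Fin 48 → ZMod 2) → ZMod 2) (hφ : ∀ a b, φ (a + b) = φ a + φ b)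
    (h1 : ∀ c ∈ C, c ≠ 0 → hammingNorm c ≤ 16 → φ c = 1) : False := by
  refine pure_bridge C (rv (n := 48) v) ?_ hsd hmin φ hφ h1
  intro a
  subst hC
  refine (mem_gen (Matrix.circulant v) _).mpr ⟨a, ?_⟩
  refine congrArg (Sum.elim (a : Fin 48 → ZMod 2)) ?_
  funext j
  exact (circ_mul (n := 48) v a j).symm

theorem bordered_case (B : Matrix (Fin 48) (Fin 48) (ZMod 2)) (hB : IsBorderMatrix (n := 47) B)
    (C : Submodule (ZMod 2) (Fin 48 ⊕ Fin 48 → ZMod 2))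
    (hC : C = borderedDCC (n := 47) B) (hsd : IsSelfDual C) (hmin : MinWeightIs C 16)
    (φ : (Fin 48 ⊕ Fin 48 → ZMod 2) → ZMod 2) (hφ : ∀ a b, φ (a + b) = φ a + φ b)
    (hφ1 : φ (fun _ => 1) = 0)
    (h1 : ∀ c ∈ C, c ≠ 0 → hammingNorm c ≤ 16 → φ c = 1) : False := by
  obtain ⟨b00, b0, b1, R', ⟨v, rfl⟩, hR⟩ := hB
  obtain ⟨⟨c0, hc0, -, hw0⟩, hm⟩ := hmin
  let r : E 47 := rv (n := 47) v
  have cw : ∀ (s : ZMod 2) (a : E 47),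
      (Sum.elim (cn s a) (fun j => ∑ i, cn s a i * B i j) : Fin 48 ⊕ Fin 48 → ZMod 2) = cwb r s a := by
    intro s a
    unfold cwb
    refine congrArg (Sum.elim (cn s a)) ?_
    funext j
    rw [Fin.sum_univ_succ, cn_zero]
    refine Fin.cases ?_ (fun j => ?_) j
    · rw [b00, mul_zero, zero_add, cn_zero]
      unfold ep
      refine Finset.sum_congr rfl fun i _ => ?_
      rw [b1 _ (Fin.succ_ne_zero i), mul_one]; rfl
    · rw [b0 _ (Fin.succ_ne_zero j), mul_one, cn_succ]
      refine Eq.trans ?_ (add_ap (n := 47) (sJ s) (a * r) j).symm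
      refine congrArg₂ (fun x y => x + y) rfl ?_
      refine Eq.trans ?_ (circ_mul (n := 47) v a j)
      refine Finset.sum_congr rfl fun i _ => ?_
      rw [hR i j]; rfl
  have cs : ∀ a : Fin 48 → ZMod 2, a = cn (a 0) (fun i : Fin 47 => a i.succ) := by
    intro a
    funext i
    refine Fin.cases ?_ (fun j => ?_) i <;> rfl
  refine bordered_bridge C r ?_ _ hC ?_ hsd hm c0 hc0 hw0 φ hφ hφ1 h1
  · intro x
    rw [hC]
    refine (mem_gen B x).trans ?_
    constructor
    · rintro ⟨a, rfl⟩
      refine ⟨a 0, (fun i : Fin 47 => a i.succ), ?_⟩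
      refine Eq.trans ?_ (cw (a 0) (fun i : Fin 47 => a i.succ))
      exact congrArg (fun b : Fin 48 → ZMod 2 => (Sum.elim b (fun j => ∑ i, b i * B i j) : Fin 48 ⊕ Fin 48 → ZMod 2)) (cs a)
    · rintro ⟨s, a, rfl⟩
      exact ⟨cn s a, (cw s a).symm⟩
  · rintro x ⟨i, rfl⟩
    have row : ∀ i : Fin 48, (Sum.elim (fun j => if j = i then (1 : ZMod 2) else 0) (B i) : Fin 48 ⊕ Fin 48 → ZMod 2) =
        Sum.elim (fun j => if j = i then (1 : ZMod 2) else 0) (fun j => ∑ k, (if k = i then (1 : ZMod 2) else 0) * B k j) := by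
      intro i
      refine congrArg _ ?_
      funext j
      simp
    have row' : ∀ i : Fin 48, ∀ s a, (fun j => if j = i then (1 : ZMod 2) else 0) = cn s a →
        (Sum.elim (fun j => if j = i then (1 : ZMod 2) else 0) (B i) : Fin 48 ⊕ Fin 48 → ZMod 2) = cwb r s a := by
      intro i s a h
      rw [row, ← cw, ← h]
    revert i
    refine Fin.cases ?_ (fun i => ?_)
    · left
      refine row' 0 1 0 ?_
      funext j
      refine Fin.cases ?_ (fun j => ?_) j
      · rfl
      · rw [if_neg (Fin.succ_ne_zero j)]; rfl
    · right
      refine ⟨i, row' i.succ 0 (X (n := 47) i) ?_⟩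
      funext j
      refine Fin.cases ?_ (fun j => ?_) j
      · rw [if_neg (Fin.succ_ne_zero i).symm]; rfl
      · rw [cn_succ]
        by_cases h : j = i
        · rw [if_pos (congrArg _ h)]; exact (if_pos h).symm
        · rw [if_neg (fun e => h (Fin.succ_injective _ e))]; exact (if_neg h).symm

end NB

theorem no_selfdual_neighbor_96_min18 (C : Submodule (ZMod 2) (Fin 48 ⊕ Fin 48 → ZMod 2))
    (hdcc : (∃ R : Matrix (Fin 48) (Fin 48) (ZMod 2), IsCirculant R ∧ C = pureDCC R) ∨
      (∃ B : Matrix (Fin 48) (Fin 48) (ZMod 2), IsBorderMatrix (n := 47) B ∧ C = borderedDCC (n := 47) B))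
    (hsd : IsSelfDual C) (hmin : MinWeightIs C 16)
    (C' : Submodule (ZMod 2) (Fin 48 ⊕ Fin 48 → ZMod 2)) (hC' : IsSelfDual C')
    (hnb : Module.finrank (ZMod 2) ↥(C ⊓ C') = 47) :
    ∃ x ∈ C', x ≠ 0 ∧ hammingNorm x ≤ 16 := by
  by_contra hcon
  push Not at hcon
  obtain ⟨φ, hφ, hφ1, h1⟩ := NB.phi_exists (by simp) C C' hsd hC' hnb hcon
  rcases hdcc with ⟨R, ⟨v, rfl⟩, hC⟩ | ⟨B, hB, hC⟩
  · exact NB.pure_case v C hC hsd hmin.2 φ hφ h1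
  · exact NB.bordered_case B hB C hC hsd hmin φ hφ hφ1 h1
end

section
/- For every doubly even self-dual binary code C of length 96 with minimum weight at least 16, the number of codewords of weight 20 satisfies A_20(C) = 3217056 − 16·A_16(C), and consequently A_16(C) ≤ 201066, where A_i(C) denotes the number of codewords of C of Hamming weight i. -/
def sg (a : ZMod 2) : ℤ := if a = 0 then 1 else -1

theorem sg_add (a b : ZMod 2) : sg (a + b) = sg a * sg b := by
  revert a b; decide

theorem sg_sum {α : Type*} (s : Finset α) (f : α → ZMod 2) :
    sg (∑ i ∈ s, f i) = ∏ i ∈ s, sg (f i) := by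
  classical
  induction s using Finset.induction_on with
  | empty => simp [sg]
  | insert a s ha ih => rw [Finset.sum_insert ha, Finset.prod_insert ha, sg_add, ih]

theorem dot_add' {ι : Type*} [Fintype ι] (v x y : ι → ZMod 2) :
    dot v (x + y) = dot v x + dot v y := by
  simp [dot, mul_add, Finset.sum_add_distrib]

theorem dot_comm' {ι : Type*} [Fintype ι] (x y : ι → ZMod 2) : dot x y = dot y x := by
  simp [dot, mul_comm]

open Classical in
theorem aux_char {ι : Type*} [Fintype ι] [DecidableEq ι] (D : Submodule (ZMod 2) (ι → ZMod 2)) (v : ι → ZMod 2) :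
    (∑ x : ι → ZMod 2, if x ∈ D then sg (dot v x) else 0) =
      if (∀ y ∈ D, dot v y = 0) then ((Finset.univ.filter (· ∈ D)).card : ℤ) else 0 := by
  split_ifs with h
  · rw [← Finset.sum_filter, Finset.card_eq_sum_ones]
    push_cast
    apply Finset.sum_congr rfl
    intro x hx
    rw [h x (by simpa using hx)]; rfl
  · push Not at h
    obtain ⟨y, hy, hvy⟩ := h
    have e := Equiv.sum_comp (Equiv.addRight y) (fun x : ι → ZMod 2 => if x ∈ D then sg (dot v x) else 0)
    have e2 : (∑ x : ι → ZMod 2, if x + y ∈ D then sg (dot v (x + y)) else 0)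
        = - ∑ x : ι → ZMod 2, if x ∈ D then sg (dot v x) else 0 := by
      rw [← Finset.sum_neg_distrib]
      apply Finset.sum_congr rfl
      intro x _
      rw [D.add_mem_iff_left hy, dot_add', sg_add]
      have : sg (dot v y) = -1 := by simp [sg, hvy]
      rw [this]; split_ifs <;> simp
    have e3 := e.symm.trans e2
    linarith

/-- sum of signs -/
def zz {ι : Type*} [Fintype ι] (x : ι → ZMod 2) : ℤ := ∑ i, sg (x i)

def ev {ι : Type*} [DecidableEq ι] {k : ℕ} (t : Fin k → ι) : ι → ZMod 2 :=
  ∑ j, Pi.single (t j) 1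

theorem dot_ev {ι : Type*} [Fintype ι] [DecidableEq ι] {k : ℕ} (t : Fin k → ι) (x : ι → ZMod 2) :
    dot (ev t) x = ∑ j, x (t j) := by
  unfold dot ev
  simp only [Finset.sum_apply, Finset.sum_mul]
  rw [Finset.sum_comm]
  apply Finset.sum_congr rfl
  intro j _
  simp [Pi.single_apply]

theorem zz_pow {ι : Type*} [Fintype ι] [DecidableEq ι] (k : ℕ) (x : ι → ZMod 2) :
    zz x ^ k = ∑ t : Fin k → ι, sg (dot (ev t) x) := by
  unfold zz
  rw [Fintype.sum_pow]
  simp only [dot_ev, sg_sum]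

theorem ev_norm {ι : Type*} [Fintype ι] [DecidableEq ι] {k : ℕ} (t : Fin k → ι) :
    hammingNorm (ev t) ≤ k := by
  unfold hammingNorm
  calc _ ≤ (Finset.univ.image t).card := by
        apply Finset.card_le_card
        intro i hi
        by_contra hn
        simp only [Finset.mem_filter, Finset.mem_univ, true_and] at hi
        apply hi
        unfold ev
        rw [Finset.sum_apply]
        apply Finset.sum_eq_zero
        intro j _
        rw [Pi.single_apply, if_neg]
        rintro rfl
        exact hn (Finset.mem_image_of_mem _ (Finset.mem_univ _))
    _ ≤ _ := Finset.card_image_le.trans (by simp)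

theorem zz_eq {ι : Type*} [Fintype ι] (x : ι → ZMod 2) :
    zz x = Fintype.card ι - 2 * hammingNorm x := by
  classical
  unfold zz hammingNorm
  have : ∀ i, sg (x i) = 1 - 2 * (if x i ≠ 0 then 1 else 0) := by
    intro i; unfold sg; by_cases h : x i = 0 <;> simp [h]
  simp only [this, Finset.sum_sub_distrib, ← Finset.mul_sum, Finset.sum_boole]
  simp

theorem dot_nondeg {ι : Type*} [Fintype ι] (v : ι → ZMod 2) : (∀ y, dot v y = 0) ↔ v = 0 := by
  classical
  constructor
  · intro h
    ext i
    simpa [dot, Pi.single_apply] using h (Pi.single i 1)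
  · rintro rfl y
    simp [dot]

open Classical in
theorem aux_pow {ι : Type*} [Fintype ι] [DecidableEq ι] (D : Submodule (ZMod 2) (ι → ZMod 2))
    (k : ℕ) (h : ∀ v : ι → ZMod 2, hammingNorm v ≤ k → ((∀ y ∈ D, dot v y = 0) ↔ v = 0)) :
    (∑ x : ι → ZMod 2, if x ∈ D then zz x ^ k else 0) =
      (Finset.univ.filter (· ∈ D)).card *
        ((Finset.univ.filter (fun t : Fin k → ι => ev t = 0)).card : ℤ) := by
  have : ∀ x : ι → ZMod 2, (if x ∈ D then zz x ^ k else 0) =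
      ∑ t : Fin k → ι, if x ∈ D then sg (dot (ev t) x) else 0 := by
    intro x
    split_ifs
    · exact zz_pow k x
    · simp
  simp only [this]
  rw [Finset.sum_comm]
  simp only [aux_char, h _ (ev_norm _)]
  rw [← Finset.sum_filter, Finset.sum_const]
  simp [mul_comm]

open Classical in
theorem card_sq {ι : Type*} [Fintype ι] [DecidableEq ι] (C : Submodule (ZMod 2) (ι → ZMod 2)) (hsd : IsSelfDual C) :
    ((Finset.univ.filter (· ∈ C)).card : ℤ) ^ 2 = 2 ^ Fintype.card ι := by
  have h1 : ∀ v, (∑ x : ι → ZMod 2, if x ∈ C then sg (dot v x) else 0) =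
      if v ∈ C then ((Finset.univ.filter (· ∈ C)).card : ℤ) else 0 := by
    intro v
    rw [aux_char]
    simp only [hsd v]
  have h2 : ∑ v : ι → ZMod 2, ∑ x : ι → ZMod 2, (if x ∈ C then sg (dot v x) else 0) =
      ((Finset.univ.filter (· ∈ C)).card : ℤ) ^ 2 := by
    simp only [h1]
    rw [← Finset.sum_filter, Finset.sum_const]
    simp [sq]
  rw [← h2, Finset.sum_comm]
  have h3 : ∀ x : ι → ZMod 2, ∑ v : ι → ZMod 2, (if x ∈ C then sg (dot v x) else 0) =
      if x = 0 then (2 ^ Fintype.card ι : ℤ) else 0 := by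
    intro x
    have := aux_char (⊤ : Submodule (ZMod 2) (ι → ZMod 2)) x
    simp only [Submodule.mem_top, if_true, true_imp_iff, dot_nondeg] at this
    by_cases hx : x ∈ C
    · simp only [hx, if_true]
      simp only [dot_comm' _ x]
      rw [this]
      simp [ZMod.card]
    · have : x ≠ 0 := by rintro rfl; exact hx C.zero_mem
      simp [hx, this]
  simp only [h3]
  simp

open Classical in
theorem design {ι : Type*} [Fintype ι] [DecidableEq ι] (C : Submodule (ZMod 2) (ι → ZMod 2)) (hsd : IsSelfDual C)
    (d : ℕ) (hmin : ∀ x ∈ C, x ≠ 0 → d ≤ hammingNorm x) (p : Polynomial ℤ) (hp : p.natDegree < d) :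
    2 ^ Fintype.card ι * (∑ x : ι → ZMod 2, if x ∈ C then p.eval (zz x) else 0) =
      (Finset.univ.filter (· ∈ C)).card * ∑ x : ι → ZMod 2, p.eval (zz x) := by
  have key : ∀ k < d, 2 ^ Fintype.card ι * (∑ x : ι → ZMod 2, if x ∈ C then zz x ^ k else 0) =
      (Finset.univ.filter (· ∈ C)).card * ∑ x : ι → ZMod 2, zz x ^ k := by
    intro k hk
    rw [aux_pow C k]
    · have := aux_pow (⊤ : Submodule (ZMod 2) (ι → ZMod 2)) k
        (fun v _ => by simpa using dot_nondeg v)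
      simp only [Submodule.mem_top, if_true] at this
      rw [this]
      simp [ZMod.card]
      ring
    · intro v hv
      rw [← hsd v]
      constructor
      · intro hvC
        by_contra h0
        have := hmin v hvC h0
        omega
      · rintro rfl; exact C.zero_mem
  have e : ∀ x : ι → ZMod 2, p.eval (zz x) = ∑ k ∈ Finset.range d, p.coeff k * zz x ^ k :=
    fun x => Polynomial.eval_eq_sum_range' hp _
  have e' : ∀ x : ι → ZMod 2, (if x ∈ C then p.eval (zz x) else 0) =
      ∑ k ∈ Finset.range d, p.coeff k * (if x ∈ C then zz x ^ k else 0) := by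
    intro x
    split_ifs
    · exact e x
    · simp
  simp only [e']
  simp only [e]
  rw [Finset.sum_comm, Finset.sum_comm (s := Finset.univ)]
  simp only [← Finset.mul_sum]
  rw [Finset.mul_sum, Finset.mul_sum]
  apply Finset.sum_congr rfl
  intro k hk
  linear_combination p.coeff k * key k (Finset.mem_range.1 hk)

theorem sum_weight (n : ℕ) (f : ℕ → ℤ) :
    ∑ x : Fin n → ZMod 2, f (hammingNorm x) = ∑ w ∈ Finset.range (n + 1), (n.choose w : ℤ) * f w := by
  have h := Finset.sum_powerset_apply_card f (x := (Finset.univ : Finset (Fin n)))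
  simp only [Finset.card_univ, Fintype.card_fin, nsmul_eq_mul] at h
  rw [← h]
  refine Finset.sum_bij' (fun x _ => Finset.univ.filter (fun i => x i ≠ 0))
    (fun s _ i => if i ∈ s then 1 else 0) ?_ ?_ ?_ ?_ ?_
  · simp
  · simp
  · intro x _
    ext i
    have : ∀ a : ZMod 2, (if a ≠ 0 then (1 : ZMod 2) else 0) = a := by decide
    simpa using this (x i)
  · intro s _
    ext i
    simp
  · intro x _
    rfl

def FF (w : ℕ) : ℤ := ∏ m ∈ Finset.range 15, ((96 - 2 * w) - (8 * m - 64) : ℤ)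

noncomputable def pp : Polynomial ℤ :=
  ∏ m ∈ Finset.range 15, (Polynomial.X - Polynomial.C (8 * m - 64 : ℤ))

theorem pp_deg : pp.natDegree < 16 := by
  unfold pp
  rw [Polynomial.natDegree_finsetProd_X_sub_C_eq_card]
  simp

theorem pp_eval (x : Fin 96 → ZMod 2) : pp.eval (zz x) = FF (hammingNorm x) := by
  simp [pp, FF, Polynomial.eval_prod, zz_eq]

theorem FF_val : ∀ w < 97, w % 4 = 0 → (w = 0 ∨ 16 ≤ w) → (w ≤ 80 ∨ w = 96) →
    FF w = (if w = 0 then FF 0 else 0) + (if w = 16 then FF 16 else 0)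
      + (if w = 20 then FF 20 else 0) + (if w = 96 then FF 96 else 0) := by
  unfold FF
  decide +kernel

theorem FF_total : ∑ w ∈ Finset.range 97, ((96 : ℕ).choose w : ℤ) * FF w =
    2 ^ 48 * (FF 0 + FF 96 + 3217056 * FF 20) := by
  unfold FF
  decide +kernel

theorem FF_16 : FF 16 = 16 * FF 20 := by
  unfold FF
  decide +kernel

theorem FF_20 : FF 20 ≠ 0 := by
  unfold FF
  decide +kernel

open Classical in
theorem we_eq {n : ℕ} (C : Submodule (ZMod 2) (Fin n → ZMod 2)) (i : ℕ) (a : ℤ) :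
    (∑ x : Fin n → ZMod 2, if x ∈ C then (if hammingNorm x = i then a else 0) else 0) =
      weightEnum C i * a := by
  unfold weightEnum
  rw [Set.ncard_eq_toFinset_card']
  simp only [← ite_and]
  rw [← Finset.sum_filter, Finset.sum_const, nsmul_eq_mul]
  congr 3
  ext x
  simp

theorem sq_aux (N : ℕ) (h : (N : ℤ) ^ 2 = 2 ^ 96) : (N : ℤ) = 2 ^ 48 := by
  rw [show (2 : ℤ) ^ 96 = (2 ^ 48) ^ 2 by norm_num] at h
  exact (sq_eq_sq₀ (by positivity) (by positivity)).1 h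

theorem gleason_doubly_even_96 (C : Submodule (ZMod 2) (Fin 96 → ZMod 2))
    (hsd : IsSelfDual C) (hde : ∀ x ∈ C, hammingNorm x % 4 = 0)
    (hmin : ∀ x ∈ C, x ≠ 0 → 16 ≤ hammingNorm x) :
    (weightEnum C 20 : ℤ) = 3217056 - 16 * (weightEnum C 16 : ℤ) ∧
    weightEnum C 16 ≤ 201066 := by
  classical
  have h0 : weightEnum C 0 = 1 := by
    unfold weightEnum
    rw [Set.ncard_eq_one]
    refine ⟨0, ?_⟩
    ext x
    simp only [Set.mem_ofPred_eq, hammingNorm_eq_zero, Set.mem_singleton_iff]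
    exact ⟨fun h => h.2, fun h => ⟨h ▸ C.zero_mem, h⟩⟩
  have hone : (fun _ => 1 : Fin 96 → ZMod 2) ∈ C := by
    rw [hsd]
    intro y hy
    have hw := hde y hy
    have e : dot (fun _ => 1) y = (hammingNorm y : ZMod 2) := by
      unfold dot hammingNorm
      rw [← Finset.sum_boole]
      apply Finset.sum_congr rfl
      intro i _
      have : ∀ a : ZMod 2, 1 * a = if a ≠ 0 then 1 else 0 := by decide
      exact this _
    rw [e, ZMod.natCast_eq_zero_iff]
    omega
  have h96 : weightEnum C 96 = 1 := by
    unfold weightEnum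
    rw [Set.ncard_eq_one]
    refine ⟨fun _ => 1, ?_⟩
    ext x
    simp only [Set.mem_ofPred_eq, Set.mem_singleton_iff]
    constructor
    · rintro ⟨_, h⟩
      unfold hammingNorm at h
      have h' := Finset.filter_card_eq (s := (Finset.univ : Finset (Fin 96))) (p := fun i => x i ≠ 0)
        (by simpa using h)
      ext i
      have : ∀ a : ZMod 2, a ≠ 0 → a = 1 := by decide
      rw [this _ (h' i (Finset.mem_univ i))]
    · rintro rfl
      exact ⟨hone, by simp [hammingNorm]⟩
  have hc : ((Finset.univ.filter (· ∈ C)).card : ℤ) = 2 ^ 48 := by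
    have := card_sq C hsd
    rw [Fintype.card_fin] at this
    exact sq_aux _ this
  have hd := design C hsd 16 hmin pp pp_deg
  simp only [pp_eval] at hd
  rw [sum_weight 96 FF, hc, FF_total, Fintype.card_fin] at hd
  have hs : (∑ x : Fin 96 → ZMod 2, if x ∈ C then FF (hammingNorm x) else 0) =
      FF 0 + weightEnum C 16 * FF 16 + weightEnum C 20 * FF 20 + FF 96 := by
    have : ∀ x : Fin 96 → ZMod 2, (if x ∈ C then FF (hammingNorm x) else 0) =
        (if x ∈ C then (if hammingNorm x = 0 then FF 0 else 0) else 0)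
        + (if x ∈ C then (if hammingNorm x = 16 then FF 16 else 0) else 0)
        + (if x ∈ C then (if hammingNorm x = 20 then FF 20 else 0) else 0)
        + (if x ∈ C then (if hammingNorm x = 96 then FF 96 else 0) else 0) := by
      intro x
      by_cases hx : x ∈ C
      · simp only [hx, if_true]
        apply FF_val _ _ (hde x hx)
        · by_cases h : x = 0
          · left; simp [h]
          · right; exact hmin x hx h
        · have hz : zz (x + fun _ => 1) = - zz x := by
            unfold zz
            rw [← Finset.sum_neg_distrib]
            apply Finset.sum_congr rfl
            intro i _
            have : ∀ a : ZMod 2, sg (a + 1) = - sg a := by decide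
            exact this _
          rw [zz_eq, zz_eq, Fintype.card_fin] at hz
          push_cast at hz
          by_cases h : x + (fun _ => 1) = 0
          · right
            rw [h, hammingNorm_zero] at hz
            push_cast at hz
            omega
          · left
            have := hmin _ (C.add_mem hx hone) h
            omega
        · have := hammingNorm_le_card_fintype (x := x)
          rw [Fintype.card_fin] at this
          omega
      · simp only [hx, if_false, add_zero]
    simp only [this, Finset.sum_add_distrib, we_eq]
    rw [h0, h96]
    simp
  rw [hs, FF_16] at hd
  have hfin : (weightEnum C 20 : ℤ) = 3217056 - 16 * (weightEnum C 16 : ℤ) := by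
    apply mul_right_cancel₀ FF_20
    have h2 : (2 : ℤ) ^ 96 ≠ 0 := by positivity
    apply mul_left_cancel₀ h2
    linear_combination hd
  exact ⟨hfin, by omega⟩
end

section
/- Let C and C' be self-dual binary codes of length n (n even) with dim(C ∩ C') = n/2 − 1, let d be the minimum weight of C, and suppose the minimum weight of C' is at least d + 2. Then there exists a vector x ∈ F_2^n such that c·x = 1 for every codeword c of C of Hamming weight d (indeed any x ∈ C' \ C works). -/
theorem dot_comm_aux {n : ℕ} (x y : Fin n → ZMod 2) : dot x y = dot y x := by
  unfold dot
  exact Finset.sum_congr rfl fun i _ => mul_comm _ _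

theorem finrank_le_aux {n : ℕ} (C : Submodule (ZMod 2) (Fin n → ZMod 2))
    (hC : IsSelfDual C) : Module.finrank (ZMod 2) C ≤ n / 2 := by
  have hB : (Matrix.toBilin' (1 : Matrix (Fin n) (Fin n) (ZMod 2))).Nondegenerate :=
    LinearMap.BilinForm.nondegenerate_toBilin'_of_det_ne_zero' _ (by simp)
  have h := LinearMap.BilinForm.finrank_orthogonal hB C
  have hle : C ≤ LinearMap.BilinForm.orthogonal
      (Matrix.toBilin' (1 : Matrix (Fin n) (Fin n) (ZMod 2))) C := by
    intro x hx
    rw [LinearMap.BilinForm.mem_orthogonal_iff]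
    intro y hy
    rw [Matrix.toBilin'_apply', Matrix.one_mulVec]
    exact (hC y).1 hy x hx
  have h2 := Submodule.finrank_mono hle
  rw [h, Module.finrank_fin_fun] at h2
  omega

theorem neighbor_gives_solution {n : ℕ} (hn : Even n)
    (C C' : Submodule (ZMod 2) (Fin n → ZMod 2))
    (hC : IsSelfDual C) (hC' : IsSelfDual C')
    (hnb : Module.finrank (ZMod 2) ↥(C ⊓ C') = n / 2 - 1)
    (d : ℕ) (hd : MinWeightIs C d)
    (hd' : ∀ x ∈ C', x ≠ 0 → d + 2 ≤ hammingNorm x) :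
    (∃ x : Fin n → ZMod 2, ∀ c ∈ C, hammingNorm c = d → dot c x = 1) ∧
    ∀ x ∈ C', x ∉ C → ∀ c ∈ C, hammingNorm c = d → dot c x = 1 := by
  obtain ⟨⟨c0, hc0, hc0n, hc0d⟩, -⟩ := hd
  have hdpos : d ≠ 0 := by
    rw [← hc0d]
    exact hammingNorm_ne_zero_iff.2 hc0n
  have hnot : ∀ c, hammingNorm c = d → c ∉ C' := by
    intro c hc hcC'
    have hne : c ≠ 0 := by
      rw [← hammingNorm_ne_zero_iff, hc]
      exact hdpos
    have := hd' c hcC' hne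
    omega
  have key : ∀ x ∈ C', x ∉ C → ∀ c ∈ C, hammingNorm c = d → dot c x = 1 := by
    intro x hx hxC c hc hcd
    have h01 : ∀ a : ZMod 2, a ≠ 0 → a = 1 := by decide
    apply h01
    intro h0
    apply hxC
    have hcC' := hnot c hcd
    have hle : (C ⊓ C') ⊔ Submodule.span (ZMod 2) {c} ≤ C :=
      sup_le inf_le_left ((Submodule.span_singleton_le_iff_mem _ _).2 hc)
    have hlt : C ⊓ C' < (C ⊓ C') ⊔ Submodule.span (ZMod 2) {c} := by
      refine lt_of_le_of_ne le_sup_left fun h => hcC' ?_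
      have : c ∈ C ⊓ C' := by
        rw [h]
        exact Submodule.mem_sup_right (Submodule.mem_span_singleton_self c)
      exact this.2
    have h1 := Submodule.finrank_lt_finrank_of_lt hlt
    have h2 := finrank_le_aux C hC
    have heq := Submodule.eq_of_le_of_finrank_le hle (by omega)
    rw [hC]
    intro y hy
    rw [← heq] at hy
    obtain ⟨a, ha, b, hb, rfl⟩ := Submodule.mem_sup.1 hy
    obtain ⟨t, rfl⟩ := Submodule.mem_span_singleton.1 hb
    have ha' : x ⬝ᵥ a = 0 := (hC' x).1 hx a ha.2
    have hc' : x ⬝ᵥ c = 0 := (dot_comm_aux x c).trans h0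
    change x ⬝ᵥ (a + t • c) = 0
    rw [dotProduct_add, dotProduct_smul, ha', hc']
    simp
  refine ⟨?_, key⟩
  by_cases h : ∃ x ∈ C', x ∉ C
  · obtain ⟨x, hx, hxC⟩ := h
    exact ⟨x, key x hx hxC⟩
  · push Not at h
    exact absurd ((hC' c0).2 fun y hy => (hC c0).1 hc0 y (h y hy)) (hnot c0 hc0d)
end
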